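/- The GL(4) tensor product algebra TA(4) = C[M_4 ⊕ M_4]^{U_4 × U_4 × U_4} is generated as a C-algebra by the twenty polynomials g_1, ..., g_20 listed in the context. -/

import Mathlib

open MvPolynomial

/-- The polynomial ring `ℂ[M_n ⊕ M_n]` in the variables `x_{ab}` (indexed by
`Sum.inl (a, b)`) and `y_{ab}` (indexed by `Sum.inr (a, b)`), `1 ≤ a, b ≤ n`. -/
abbrev MV (n : ℕ) := MvPolynomial ((Fin n × Fin n) ⊕ (Fin n × Fin n)) ℂ

/-- `g` is upper triangular with all diagonal entries equal to `1`. -/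
def IsUniUpper {n : ℕ} (g : Matrix (Fin n) (Fin n) ℂ) : Prop :=
  (∀ i, g i i = 1) ∧ ∀ i j : Fin n, j < i → g i j = 0

/-- The action of `(g₁, g₂, g₃) ∈ GL(n)³` on `ℂ[M_n ⊕ M_n]`, given by
`(g·f)(m₁, m₂) = f(g₁ᵀ m₁ g₂, g₁ᵀ m₂ g₃)`: it substitutes for `x_{ab}` the
`(a,b)` entry of `g₁ᵀ X g₂` and for `y_{ab}` the `(a,b)` entry of `g₁ᵀ Y g₃`. -/
noncomputable def act (n : ℕ) (g1 g2 g3 : Matrix (Fin n) (Fin n) ℂ) : MV n →ₐ[ℂ] MV n :=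
  aeval (Sum.elim
    (fun p : Fin n × Fin n => ∑ c : Fin n, ∑ d : Fin n,
      C (g1 c p.1) * C (g2 d p.2) * X (Sum.inl (c, d)))
    (fun p : Fin n × Fin n => ∑ c : Fin n, ∑ d : Fin n,
      C (g1 c p.1) * C (g3 d p.2) * X (Sum.inr (c, d))))

/-- The tensor product algebra `TA(n)`: the subalgebra of `ℂ[M_n ⊕ M_n]` of
polynomials invariant under `U_n × U_n × U_n`. -/
noncomputable def TA (n : ℕ) : Subalgebra ℂ (MV n) where
  carrier := {f | ∀ g1 g2 g3 : Matrix (Fin n) (Fin n) ℂ,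
      IsUniUpper g1 → IsUniUpper g2 → IsUniUpper g3 → act n g1 g2 g3 f = f}
  mul_mem' := by
    intro a b ha hb g1 g2 g3 u1 u2 u3
    rw [map_mul, ha g1 g2 g3 u1 u2 u3, hb g1 g2 g3 u1 u2 u3]
  one_mem' := by
    intro g1 g2 g3 u1 u2 u3
    rw [map_one]
  add_mem' := by
    intro a b ha hb g1 g2 g3 u1 u2 u3
    rw [map_add, ha g1 g2 g3 u1 u2 u3, hb g1 g2 g3 u1 u2 u3]
  zero_mem' := by
    intro g1 g2 g3 u1 u2 u3
    rw [map_zero]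
  algebraMap_mem' := by
    intro r g1 g2 g3 u1 u2 u3
    exact (act n g1 g2 g3).commutes r

/-- The minor `Δ(i; j₁, ..., j_k)`: the determinant of the `(i+k) × (i+k)` matrix
whose columns are columns `1, ..., i` of `(x_{ab})` followed by the columns of
`(y_{ab})` selected by `j`, restricted to rows `1, ..., i+k`. -/
noncomputable def Delta (n i k : ℕ) (hik : i + k ≤ n) (j : Fin k → Fin n) : MV n :=
  Matrix.det (Matrix.of fun r c : Fin (i + k) =>
    if hc : (c : ℕ) < i then
      X (Sum.inl (Fin.castLE hik r, ⟨(c : ℕ), by omega⟩))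
    else
      X (Sum.inr (Fin.castLE hik r, j ⟨(c : ℕ) - i, by have := c.isLt; omega⟩)))

/-- `g₁ = Δ(0; 1)`, ..., `g₂₀ = Δ(3;2)Δ(1;1) - Δ(3;1)Δ(1;2)`: the twenty generators
of the `GL(4)` tensor product algebra (column indices of `y` are zero-based). -/
noncomputable def g : Fin 20 → MV 4 :=
  ![Delta 4 0 1 (by omega) ![0],
    Delta 4 0 2 (by omega) ![0, 1],
    Delta 4 0 3 (by omega) ![0, 1, 2],
    Delta 4 0 4 (by omega) ![0, 1, 2, 3],
    Delta 4 1 0 (by omega) ![],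
    Delta 4 1 1 (by omega) ![0],
    Delta 4 1 2 (by omega) ![0, 1],
    Delta 4 1 3 (by omega) ![0, 1, 2],
    Delta 4 2 0 (by omega) ![],
    Delta 4 2 1 (by omega) ![0],
    Delta 4 2 2 (by omega) ![0, 1],
    Delta 4 3 0 (by omega) ![],
    Delta 4 3 1 (by omega) ![0],
    Delta 4 4 0 (by omega) ![],
    Delta 4 2 1 (by omega) ![1] * Delta 4 0 1 (by omega) ![0] -
      Delta 4 2 1 (by omega) ![0] * Delta 4 0 1 (by omega) ![1],
    Delta 4 2 2 (by omega) ![1, 2] * Delta 4 0 1 (by omega) ![0] -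
      Delta 4 2 2 (by omega) ![0, 2] * Delta 4 0 1 (by omega) ![1] +
      Delta 4 2 2 (by omega) ![0, 1] * Delta 4 0 1 (by omega) ![2],
    Delta 4 2 2 (by omega) ![0, 2] * Delta 4 0 2 (by omega) ![0, 1] -
      Delta 4 2 2 (by omega) ![0, 1] * Delta 4 0 2 (by omega) ![0, 2],
    Delta 4 3 1 (by omega) ![1] * Delta 4 0 1 (by omega) ![0] -
      Delta 4 3 1 (by omega) ![0] * Delta 4 0 1 (by omega) ![1],
    Delta 4 3 1 (by omega) ![2] * Delta 4 0 2 (by omega) ![0, 1] -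
      Delta 4 3 1 (by omega) ![1] * Delta 4 0 2 (by omega) ![0, 2] +
      Delta 4 3 1 (by omega) ![0] * Delta 4 0 2 (by omega) ![1, 2],
    Delta 4 3 1 (by omega) ![1] * Delta 4 1 1 (by omega) ![0] -
      Delta 4 3 1 (by omega) ![0] * Delta 4 1 1 (by omega) ![1]]

namespace TA4

/-- 4 by 4 matrices. -/
abbrev M4 (S : Type) := Matrix (Fin 4) (Fin 4) S

/-- Evaluation of a polynomial at a pair of matrices over a commutative algebra. -/
noncomputable def ev {S : Type} [CommRing S] [Algebra ℂ S] (A B : M4 S) : MV 4 →ₐ[ℂ] S :=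
  aeval (Sum.elim (fun p => A p.1 p.2) (fun p => B p.1 p.2))

/-- Upper triangular unipotent matrices over a ring. -/
def UU {S : Type} [CommRing S] (g : M4 S) : Prop :=
  (∀ i, g i i = 1) ∧ ∀ i j : Fin 4, j < i → g i j = 0

section
variable {S T : Type} [CommRing S] [Algebra ℂ S] [CommRing T] [Algebra ℂ T]

@[simp] lemma ev_inl (A B : M4 S) (a b : Fin 4) : ev A B (X (Sum.inl (a, b))) = A a b := by
  simp [ev]

@[simp] lemma ev_inr (A B : M4 S) (a b : Fin 4) : ev A B (X (Sum.inr (a, b))) = B a b := by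
  simp [ev]

lemma ev_map (φ : S →ₐ[ℂ] T) (A B : M4 S) (f : MV 4) :
    φ (ev A B f) = ev (A.map φ) (B.map φ) f := by
  have : φ.comp (ev A B) = ev (A.map φ) (B.map φ) := by
    apply MvPolynomial.algHom_ext
    rintro (⟨a, b⟩ | ⟨a, b⟩) <;> simp
  exact DFunLike.congr_fun this f

lemma ev_act (g1 g2 g3 : M4 ℂ) (A B : M4 ℂ) (f : MV 4) :
    ev A B (act 4 g1 g2 g3 f) = ev (g1.transpose * A * g2) (g1.transpose * B * g3) f := by
  have : (ev A B).comp (act 4 g1 g2 g3) =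
      ev (g1.transpose * A * g2) (g1.transpose * B * g3) := by
    apply MvPolynomial.algHom_ext
    rintro (⟨a, b⟩ | ⟨a, b⟩)
    · simp only [AlgHom.comp_apply, act, aeval_X, Sum.elim_inl, map_sum, map_mul, ev_inl]
      simp only [Matrix.mul_apply, Matrix.transpose_apply, Finset.sum_mul]
      rw [Finset.sum_comm]
      refine Finset.sum_congr rfl fun c _ => Finset.sum_congr rfl fun d _ => ?_
      simp [ev]; ring
    · simp only [AlgHom.comp_apply, act, aeval_X, Sum.elim_inr, map_sum, map_mul, ev_inr]
      simp only [Matrix.mul_apply, Matrix.transpose_apply, Finset.sum_mul]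
      rw [Finset.sum_comm]
      refine Finset.sum_congr rfl fun c _ => Finset.sum_congr rfl fun d _ => ?_
      simp [ev]; ring
  exact DFunLike.congr_fun this f

lemma eq_of_ev {f h : MV 4} (H : ∀ A B : M4 ℂ, ev A B f = ev A B h) : f = h := by
  apply MvPolynomial.funext
  intro x
  have := H (fun a b => x (Sum.inl (a, b))) (fun a b => x (Sum.inr (a, b)))
  have e : (Sum.elim (fun p : Fin 4 × Fin 4 => x (Sum.inl (p.1, p.2)))
      (fun p : Fin 4 × Fin 4 => x (Sum.inr (p.1, p.2)))) = x := by
    funext p; rcases p with p | p <;> rfl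
  simpa [ev, e, aeval_eq_eval] using this

lemma mem_TA_of {f : MV 4} (H : ∀ g1 g2 g3 : M4 ℂ, UU g1 → UU g2 → UU g3 → ∀ A B : M4 ℂ,
    ev (g1.transpose * A * g2) (g1.transpose * B * g3) f = ev A B f) : f ∈ TA 4 := by
  intro g1 g2 g3 h1 h2 h3
  apply eq_of_ev
  intro A B
  rw [ev_act]
  exact H g1 g2 g3 h1 h2 h3 A B

/-- index type for the generic invariance identity -/
abbrev GI := (Fin 3 × Fin 4 × Fin 4) ⊕ ((Fin 4 × Fin 4) ⊕ (Fin 4 × Fin 4))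

/-- generic unipotent matrix -/
noncomputable def GU (k : Fin 3) : M4 (MvPolynomial GI ℂ) := fun i j =>
  if i = j then 1 else if i < j then X (Sum.inl (k, i, j)) else 0

noncomputable def GX : M4 (MvPolynomial GI ℂ) := fun i j => X (Sum.inr (Sum.inl (i, j)))

noncomputable def GY : M4 (MvPolynomial GI ℂ) := fun i j => X (Sum.inr (Sum.inr (i, j)))

lemma GU_map (φ : MvPolynomial GI ℂ →ₐ[ℂ] S) (k : Fin 3) : UU ((GU k).map φ) := by
  refine ⟨fun i => by simp [GU], fun i j h => ?_⟩
  have h1 : i ≠ j := by rintro rfl; exact lt_irrefl _ h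
  have h2 : ¬ i < j := not_lt.mpr h.le
  simp [GU, h1, h2]

lemma ev_generic (φ : MvPolynomial GI ℂ →ₐ[ℂ] S) (f : MV 4) :
    φ (ev ((GU 0).transpose * GX * GU 1) ((GU 0).transpose * GY * GU 2) f) =
    ev (((GU 0).map φ).transpose * GX.map φ * (GU 1).map φ)
       (((GU 0).map φ).transpose * GY.map φ * (GU 2).map φ) f := by
  rw [ev_map]
  congr 2 <;> simp [Matrix.map_mul, Matrix.transpose_map]

lemma generic_inv {f : MV 4} (hf : f ∈ TA 4) :
    ev ((GU 0).transpose * GX * GU 1) ((GU 0).transpose * GY * GU 2) f = ev GX GY f := by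
  apply MvPolynomial.funext
  intro x
  have h1 := ev_generic (aeval x : MvPolynomial GI ℂ →ₐ[ℂ] ℂ) f
  have h2 := ev_map (aeval x : MvPolynomial GI ℂ →ₐ[ℂ] ℂ) GX GY f
  have h3 : act 4 ((GU 0).map (aeval x)) ((GU 1).map (aeval x)) ((GU 2).map (aeval x)) f = f :=
    hf _ _ _ (GU_map _ 0) (GU_map _ 1) (GU_map _ 2)
  have h4 := ev_act ((GU 0).map (aeval x)) ((GU 1).map (aeval x)) ((GU 2).map (aeval x))
    (GX.map (aeval x)) (GY.map (aeval x)) f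
  rw [h3] at h4
  rw [← h4, ← h2] at h1
  simpa [aeval_eq_eval] using h1

/-- Elements of `TA 4` are invariant under unipotent points over any algebra. -/
lemma inv_of_mem {f : MV 4} (hf : f ∈ TA 4) (g1 g2 g3 : M4 S) (h1 : UU g1) (h2 : UU g2)
    (h3 : UU g3) (A B : M4 S) :
    ev (g1.transpose * A * g2) (g1.transpose * B * g3) f = ev A B f := by
  let φ : MvPolynomial GI ℂ →ₐ[ℂ] S := aeval (Sum.elim
    (fun q => (![g1, g2, g3] q.1) q.2.1 q.2.2)
    (Sum.elim (fun p => A p.1 p.2) (fun p => B p.1 p.2)))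
  have hU : ∀ k : Fin 3, UU (![g1, g2, g3] k) := by
    intro k; fin_cases k <;> assumption
  have e : ∀ k : Fin 3, (GU k).map φ = ![g1, g2, g3] k := by
    intro k
    ext i j
    rcases lt_trichotomy i j with h | h | h
    · simp [GU, φ, h.ne, h]
    · subst h; simp [GU, (hU k).1 i]
    · simp [GU, h.ne', not_lt.mpr h.le, (hU k).2 i j h]
  have eX : GX.map φ = A := by ext i j; simp [GX, φ]
  have eY : GY.map φ = B := by ext i j; simp [GY, φ]
  have := congrArg φ (generic_inv hf)
  rw [ev_generic, ev_map, e, e, e, eX, eY] at this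
  exact this
end
end TA4

namespace TA4

section
variable {S : Type} [CommRing S]

/-- Minors on the top rows of given column vectors. -/
def m1 (u : Fin 4 → S) : S := u 0
def m2 (u v : Fin 4 → S) : S := u 0 * v 1 - u 1 * v 0
def m3 (u v w : Fin 4 → S) : S :=
  u 0 * (v 1 * w 2 - v 2 * w 1) - u 1 * (v 0 * w 2 - v 2 * w 0) + u 2 * (v 0 * w 1 - v 1 * w 0)
def m4 (u v w z : Fin 4 → S) : S :=
  (u 0 * v 1 - u 1 * v 0) * (w 2 * z 3 - w 3 * z 2)
  - (u 0 * v 2 - u 2 * v 0) * (w 1 * z 3 - w 3 * z 1)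
  + (u 0 * v 3 - u 3 * v 0) * (w 1 * z 2 - w 2 * z 1)
  + (u 1 * v 2 - u 2 * v 1) * (w 0 * z 3 - w 3 * z 0)
  - (u 1 * v 3 - u 3 * v 1) * (w 0 * z 2 - w 2 * z 0)
  + (u 2 * v 3 - u 3 * v 2) * (w 0 * z 1 - w 1 * z 0)

/-- Column of a matrix. -/
def cl (A : M4 S) (j : Fin 4) : Fin 4 → S := fun r => A r j

lemma det1 (M : Matrix (Fin 1) (Fin 1) S) : M.det = M 0 0 := Matrix.det_fin_one M
lemma det4 (M : Matrix (Fin 4) (Fin 4) S) : M.det = m4 (cl M 0) (cl M 1) (cl M 2) (cl M 3) := by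
  simp [Matrix.det_succ_row_zero, Fin.sum_univ_succ, Fin.succAbove, m4, cl]
  ring
lemma det3 (M : Matrix (Fin 3) (Fin 3) S) : M.det =
    M 0 0 * (M 1 1 * M 2 2 - M 2 1 * M 1 2) - M 1 0 * (M 0 1 * M 2 2 - M 2 1 * M 0 2)
     + M 2 0 * (M 0 1 * M 1 2 - M 1 1 * M 0 2) := by
  rw [Matrix.det_fin_three]; ring
lemma det2 (M : Matrix (Fin 2) (Fin 2) S) : M.det = M 0 0 * M 1 1 - M 1 0 * M 0 1 := by
  rw [Matrix.det_fin_two]; ring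

/-- The values of the twenty generators, in terms of columns. -/
def gv (A B : M4 S) : Fin 20 → S :=
  ![m1 (cl B 0), m2 (cl B 0) (cl B 1), m3 (cl B 0) (cl B 1) (cl B 2),
    m4 (cl B 0) (cl B 1) (cl B 2) (cl B 3),
    m1 (cl A 0), m2 (cl A 0) (cl B 0), m3 (cl A 0) (cl B 0) (cl B 1),
    m4 (cl A 0) (cl B 0) (cl B 1) (cl B 2),
    m2 (cl A 0) (cl A 1), m3 (cl A 0) (cl A 1) (cl B 0), m4 (cl A 0) (cl A 1) (cl B 0) (cl B 1),
    m3 (cl A 0) (cl A 1) (cl A 2), m4 (cl A 0) (cl A 1) (cl A 2) (cl B 0),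
    m4 (cl A 0) (cl A 1) (cl A 2) (cl A 3),
    m3 (cl A 0) (cl A 1) (cl B 1) * m1 (cl B 0) - m3 (cl A 0) (cl A 1) (cl B 0) * m1 (cl B 1),
    m4 (cl A 0) (cl A 1) (cl B 1) (cl B 2) * m1 (cl B 0) -
      m4 (cl A 0) (cl A 1) (cl B 0) (cl B 2) * m1 (cl B 1) +
      m4 (cl A 0) (cl A 1) (cl B 0) (cl B 1) * m1 (cl B 2),
    m4 (cl A 0) (cl A 1) (cl B 0) (cl B 2) * m2 (cl B 0) (cl B 1) -
      m4 (cl A 0) (cl A 1) (cl B 0) (cl B 1) * m2 (cl B 0) (cl B 2),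
    m4 (cl A 0) (cl A 1) (cl A 2) (cl B 1) * m1 (cl B 0) -
      m4 (cl A 0) (cl A 1) (cl A 2) (cl B 0) * m1 (cl B 1),
    m4 (cl A 0) (cl A 1) (cl A 2) (cl B 2) * m2 (cl B 0) (cl B 1) -
      m4 (cl A 0) (cl A 1) (cl A 2) (cl B 1) * m2 (cl B 0) (cl B 2) +
      m4 (cl A 0) (cl A 1) (cl A 2) (cl B 0) * m2 (cl B 1) (cl B 2),
    m4 (cl A 0) (cl A 1) (cl A 2) (cl B 1) * m2 (cl A 0) (cl B 0) -
      m4 (cl A 0) (cl A 1) (cl A 2) (cl B 0) * m2 (cl A 0) (cl B 1)]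

/-! Invariance under left multiplication by lower unipotent matrices. -/
lemma cl_left (h : M4 S) (A C : M4 S) (hC : C = h * A) (j : Fin 4) :
   cl C j = h.mulVec (cl A j) := by
  subst hC
  funext r
  simp [cl, Matrix.mul_apply, Matrix.mulVec, dotProduct]

variable [Algebra ℂ S] (A B : M4 S)

lemma ev_D01 (h) (j : Fin 4) : ev A B (Delta 4 0 1 h ![j]) = m1 (cl B j) := by
  rw [Delta, AlgHom.map_det]; erw [det1]; simp [m1, cl]
lemma ev_D10 (h) : ev A B (Delta 4 1 0 h ![]) = m1 (cl A 0) := by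
  rw [Delta, AlgHom.map_det]; erw [det1]; simp [m1, cl]
lemma ev_D02 (h) (j k : Fin 4) : ev A B (Delta 4 0 2 h ![j, k]) = m2 (cl B j) (cl B k) := by
  rw [Delta, AlgHom.map_det]; erw [det2]; simp [m2, cl]
lemma ev_D11 (h) (j : Fin 4) : ev A B (Delta 4 1 1 h ![j]) = m2 (cl A 0) (cl B j) := by
  rw [Delta, AlgHom.map_det]; erw [det2]; simp [m2, cl]
lemma ev_D20 (h) : ev A B (Delta 4 2 0 h ![]) = m2 (cl A 0) (cl A 1) := by
  rw [Delta, AlgHom.map_det]; erw [det2]; simp [m2, cl]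
lemma ev_D03 (h) (j k l : Fin 4) : ev A B (Delta 4 0 3 h ![j, k, l]) =
    m3 (cl B j) (cl B k) (cl B l) := by
  rw [Delta, AlgHom.map_det]; erw [det3]; simp [m3, cl]
lemma ev_D12 (h) (j k : Fin 4) : ev A B (Delta 4 1 2 h ![j, k]) =
    m3 (cl A 0) (cl B j) (cl B k) := by
  rw [Delta, AlgHom.map_det]; erw [det3]; simp [m3, cl]
lemma ev_D21 (h) (j : Fin 4) : ev A B (Delta 4 2 1 h ![j]) =
    m3 (cl A 0) (cl A 1) (cl B j) := by
  rw [Delta, AlgHom.map_det]; erw [det3]; simp [m3, cl]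
lemma ev_D30 (h) : ev A B (Delta 4 3 0 h ![]) =
    m3 (cl A 0) (cl A 1) (cl A 2) := by
  rw [Delta, AlgHom.map_det]; erw [det3]; simp [m3, cl]
lemma ev_D04 (h) (j k l m : Fin 4) : ev A B (Delta 4 0 4 h ![j, k, l, m]) =
    m4 (cl B j) (cl B k) (cl B l) (cl B m) := by
  rw [Delta, AlgHom.map_det]; erw [det4]; simp [m4, cl]
lemma ev_D13 (h) (j k l : Fin 4) : ev A B (Delta 4 1 3 h ![j, k, l]) =
    m4 (cl A 0) (cl B j) (cl B k) (cl B l) := by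
  rw [Delta, AlgHom.map_det]; erw [det4]; simp [m4, cl]
lemma ev_D22 (h) (j k : Fin 4) : ev A B (Delta 4 2 2 h ![j, k]) =
    m4 (cl A 0) (cl A 1) (cl B j) (cl B k) := by
  rw [Delta, AlgHom.map_det]; erw [det4]; simp [m4, cl]
lemma ev_D31 (h) (j : Fin 4) : ev A B (Delta 4 3 1 h ![j]) =
    m4 (cl A 0) (cl A 1) (cl A 2) (cl B j) := by
  rw [Delta, AlgHom.map_det]; erw [det4]; simp [m4, cl]
lemma ev_D40 (h) : ev A B (Delta 4 4 0 h ![]) =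
    m4 (cl A 0) (cl A 1) (cl A 2) (cl A 3) := by
  rw [Delta, AlgHom.map_det]; erw [det4]; simp [m4, cl]

lemma ev_g (j : Fin 20) : ev A B (g j) = gv A B j := by
  fin_cases j <;>
  simp only [g, gv, Fin.mk_zero, Fin.mk_one, Fin.reduceFinMk, Fin.zero_eta, Matrix.cons_val,
    map_sub, map_add, map_mul,
    ev_D01, ev_D02, ev_D03, ev_D04, ev_D10, ev_D11, ev_D12, ev_D13, ev_D20, ev_D21, ev_D22,
    ev_D30, ev_D31, ev_D40]

end

section
variable {S : Type} [CommRing S]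

/-- action of a transposed unipotent matrix on a vector -/
lemma lowvec {g1 : M4 S} (h : UU g1) (u : Fin 4 → S) :
    g1.transpose.mulVec u = ![u 0, g1 0 1 * u 0 + u 1, g1 0 2 * u 0 + g1 1 2 * u 1 + u 2,
      g1 0 3 * u 0 + g1 1 3 * u 1 + g1 2 3 * u 2 + u 3] := by
  obtain ⟨hd, hl⟩ := h
  have := hl 1 0 (by decide); have := hl 2 0 (by decide); have := hl 3 0 (by decide)
  have := hl 2 1 (by decide); have := hl 3 1 (by decide); have := hl 3 2 (by decide)
  have := hd 0; have := hd 1; have := hd 2; have := hd 3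
  funext r
  fin_cases r <;> simp_all [Matrix.mulVec, dotProduct, Fin.sum_univ_four]

lemma m1_low {g1 : M4 S} (h : UU g1) (u : Fin 4 → S) :
    m1 (g1.transpose.mulVec u) = m1 u := by
  simp [lowvec h, m1]
lemma m2_low {g1 : M4 S} (h : UU g1) (u v : Fin 4 → S) :
    m2 (g1.transpose.mulVec u) (g1.transpose.mulVec v) = m2 u v := by
  simp [lowvec h, m2]; ring
lemma m3_low {g1 : M4 S} (h : UU g1) (u v w : Fin 4 → S) :
    m3 (g1.transpose.mulVec u) (g1.transpose.mulVec v) (g1.transpose.mulVec w) = m3 u v w := by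
  simp [lowvec h, m3]; ring
lemma m4_low {g1 : M4 S} (h : UU g1) (u v w z : Fin 4 → S) :
    m4 (g1.transpose.mulVec u) (g1.transpose.mulVec v) (g1.transpose.mulVec w)
      (g1.transpose.mulVec z) = m4 u v w z := by
  have hdet : g1.det = 1 := by
    rw [Matrix.det_of_upperTriangular (fun i j hij => h.2 i j hij)]
    simp [h.1]
  have e1 := det4 (Matrix.of fun r c => (![u, v, w, z] : Fin 4 → Fin 4 → S) c r)
  have e2 := det4 (g1.transpose * Matrix.of fun r c => (![u, v, w, z] : Fin 4 → Fin 4 → S) c r)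
  rw [Matrix.det_mul, Matrix.det_transpose, hdet, one_mul, e1] at e2
  rw [cl_left _ _ _ rfl, cl_left _ _ _ rfl, cl_left _ _ _ rfl, cl_left _ _ _ rfl] at e2
  exact e2.symm

lemma gv_low {g1 : M4 S} (h : UU g1) (A B : M4 S) :
    gv (g1.transpose * A) (g1.transpose * B) = gv A B := by
  simp only [gv, cl_left g1.transpose A _ rfl, cl_left g1.transpose B _ rfl, m1_low h, m2_low h, m3_low h, m4_low h]

lemma cl_right {h : M4 S} (hu : UU h) (A : M4 S) :
    cl (A * h) 0 = cl A 0 ∧ cl (A * h) 1 = (fun r => h 0 1 * cl A 0 r + cl A 1 r) ∧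
    cl (A * h) 2 = (fun r => h 0 2 * cl A 0 r + h 1 2 * cl A 1 r + cl A 2 r) ∧
    cl (A * h) 3 = (fun r => h 0 3 * cl A 0 r + h 1 3 * cl A 1 r + h 2 3 * cl A 2 r + cl A 3 r) := by
  obtain ⟨hd, hl⟩ := hu
  have := hl 1 0 (by decide); have := hl 2 0 (by decide); have := hl 3 0 (by decide)
  have := hl 2 1 (by decide); have := hl 3 1 (by decide); have := hl 3 2 (by decide)
  have := hd 0; have := hd 1; have := hd 2; have := hd 3
  refine ⟨?_, ?_, ?_, ?_⟩ <;> funext r <;>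
  simp_all [cl, Matrix.mul_apply, Fin.sum_univ_four] <;> ring

/-- linearity in the last slots -/
lemma gv_right {h2 h3 : M4 S} (hu2 : UU h2) (hu3 : UU h3) (A B : M4 S) (j : Fin 20) :
    gv (A * h2) (B * h3) j = gv A B j := by
  obtain ⟨a0, a1, a2, a3⟩ := cl_right hu2 A
  obtain ⟨b0, b1, b2, b3⟩ := cl_right hu3 B
  simp only [gv, a0, a1, a2, a3, b0, b1, b2, b3]
  generalize cl A 0 = x0
  generalize cl A 1 = x1
  generalize cl A 2 = x2
  generalize cl A 3 = x3
  generalize cl B 0 = y0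
  generalize cl B 1 = y1
  generalize cl B 2 = y2
  generalize cl B 3 = y3
  have l2 : ∀ (s : S) (u v w : Fin 4 → S), m2 u (fun r => s * v r + w r) = s * m2 u v + m2 u w := by
    intros; simp only [m2]; ring
  have l2' : ∀ (s t : S) (u v v' w : Fin 4 → S),
      m2 u (fun r => s * v r + t * v' r + w r) = s * m2 u v + t * m2 u v' + m2 u w := by
    intros; simp only [m2]; ring
  have k2 : ∀ (s : S) (u v w : Fin 4 → S), m2 (fun r => s * v r + w r) u = s * m2 v u + m2 w u := by
    intros; simp only [m2]; ring
  have z2 : ∀ (u : Fin 4 → S), m2 u u = 0 := by intros; simp only [m2]; ring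
  have w2 : m2 y1 y0 = - m2 y0 y1 := by simp only [m2]; ring
  have l3 : ∀ (s : S) (u u' v w : Fin 4 → S), m3 u u' (fun r => s * v r + w r) =
      s * m3 u u' v + m3 u u' w := by
    intros; simp only [m3]; ring
  have l3' : ∀ (s t : S) (u u' v v' w : Fin 4 → S),
      m3 u u' (fun r => s * v r + t * v' r + w r) = s * m3 u u' v + t * m3 u u' v' + m3 u u' w := by
    intros; simp only [m3]; ring
  have k3 : ∀ (s : S) (u u' v w : Fin 4 → S), m3 u (fun r => s * v r + w r) u' =
      s * m3 u v u' + m3 u w u' := by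
    intros; simp only [m3]; ring
  have z3 : ∀ (u v : Fin 4 → S), m3 u u v = 0 := by intros; simp only [m3]; ring
  have z3' : ∀ (u v : Fin 4 → S), m3 u v u = 0 := by intros; simp only [m3]; ring
  have z3'' : ∀ (u v : Fin 4 → S), m3 v u u = 0 := by intros; simp only [m3]; ring
  have l4 : ∀ (s : S) (u u' u'' v w : Fin 4 → S), m4 u u' u'' (fun r => s * v r + w r) =
      s * m4 u u' u'' v + m4 u u' u'' w := by
    intros; simp only [m4]; ring
  have l4' : ∀ (s t : S) (u u' u'' v v' w : Fin 4 → S),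
      m4 u u' u'' (fun r => s * v r + t * v' r + w r) =
      s * m4 u u' u'' v + t * m4 u u' u'' v' + m4 u u' u'' w := by
    intros; simp only [m4]; ring
  have l4'' : ∀ (s t q : S) (u u' u'' v v' v'' w : Fin 4 → S),
      m4 u u' u'' (fun r => s * v r + t * v' r + q * v'' r + w r) =
      s * m4 u u' u'' v + t * m4 u u' u'' v' + q * m4 u u' u'' v'' + m4 u u' u'' w := by
    intros; simp only [m4]; ring
  have k4 : ∀ (s : S) (u u' u'' v w : Fin 4 → S), m4 u u' (fun r => s * v r + w r) u'' =
      s * m4 u u' v u'' + m4 u u' w u'' := by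
    intros; simp only [m4]; ring
  have k4' : ∀ (s t : S) (u u' u'' v v' w : Fin 4 → S),
      m4 u u' (fun r => s * v r + t * v' r + w r) u'' =
      s * m4 u u' v u'' + t * m4 u u' v' u'' + m4 u u' w u'' := by
    intros; simp only [m4]; ring
  have i4 : ∀ (s : S) (u u' u'' v w : Fin 4 → S), m4 u (fun r => s * v r + w r) u' u'' =
      s * m4 u v u' u'' + m4 u w u' u'' := by
    intros; simp only [m4]; ring
  have z4a : ∀ (u v w : Fin 4 → S), m4 u u v w = 0 := by intros; simp only [m4]; ring
  have z4b : ∀ (u v w : Fin 4 → S), m4 u v u w = 0 := by intros; simp only [m4]; ring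
  have z4c : ∀ (u v w : Fin 4 → S), m4 u v w u = 0 := by intros; simp only [m4]; ring
  have z4d : ∀ (u v w : Fin 4 → S), m4 v u u w = 0 := by intros; simp only [m4]; ring
  have z4e : ∀ (u v w : Fin 4 → S), m4 v u w u = 0 := by intros; simp only [m4]; ring
  have z4f : ∀ (u v w : Fin 4 → S), m4 v w u u = 0 := by intros; simp only [m4]; ring
  have w4 : m4 x0 x1 y1 y0 = - m4 x0 x1 y0 y1 := by simp only [m4]; ring
  have e1 : ∀ (s : S) (v w : Fin 4 → S), m1 (fun r => s * v r + w r) = s * m1 v + m1 w := by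
    intros; simp only [m1]
  have e1' : ∀ (s t : S) (v v' w : Fin 4 → S), m1 (fun r => s * v r + t * v' r + w r) =
      s * m1 v + t * m1 v' + m1 w := by
    intros; simp only [m1]
  fin_cases j <;>
  simp only [Fin.mk_zero, Fin.mk_one, Fin.reduceFinMk, Fin.zero_eta, Matrix.cons_val,
    l2, l2', k2, z2, w2, l3, l3', k3, z3, z3', z3'', l4, l4', l4'', k4, k4', i4, z4a, z4b, z4c,
    z4d, z4e, z4f, w4, e1, e1', mul_zero, zero_add, add_zero] <;> ring

end

lemma g_mem (j : Fin 20) : g j ∈ TA 4 := by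
  apply mem_TA_of
  intro g1 g2 g3 h1 h2 h3 A B
  rw [ev_g, ev_g, gv_right h2 h3, gv_low h1]

lemma adjoin_le : Algebra.adjoin ℂ (Set.range g) ≤ TA 4 := by
  apply Algebra.adjoin_le
  rintro _ ⟨j, rfl⟩
  exact g_mem j

end TA4

namespace TA4

section
variable {S : Type} [CommRing S]

/-- First slice, `x`-part. -/
def A1 (p : Fin 14 → S) : M4 S :=
  !![p 6, 0, 0, 0; 0, p 7, 0, 0; 0, 0, p 8, 0; 0, 0, 0, p 9]

/-- First slice, `y`-part. -/
def B1 (p : Fin 14 → S) : M4 S :=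
  !![p 10, 0, 0, 0; p 0 * p 10, p 11, 0, 0; p 1 * p 10, p 3 * p 11, p 12, 0;
    p 2 * p 10, p 4 * p 11, p 5 * p 12, p 13]

end

/-- Leading principal minors are nonzero. -/
def LPM (M : M4 ℂ) : Prop :=
  m1 (cl M 0) ≠ 0 ∧ m2 (cl M 0) (cl M 1) ≠ 0 ∧ m3 (cl M 0) (cl M 1) (cl M 2) ≠ 0 ∧
    m4 (cl M 0) (cl M 1) (cl M 2) (cl M 3) ≠ 0

lemma col_red (M : M4 ℂ) (h : LPM M) : ∃ u : M4 ℂ, UU u ∧ ∀ i j : Fin 4, i < j → (M * u) i j = 0 := by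
  obtain ⟨h1, h2, h3, -⟩ := h
  generalize hc0 : cl M 0 = c0 at *
  generalize hc1 : cl M 1 = c1 at *
  generalize hc2 : cl M 2 = c2 at *
  generalize hc3 : cl M 3 = c3 at *
  have e0 : ∀ r, M r 0 = c0 r := fun r => by rw [← hc0]; rfl
  have e1 : ∀ r, M r 1 = c1 r := fun r => by rw [← hc1]; rfl
  have e2 : ∀ r, M r 2 = c2 r := fun r => by rw [← hc2]; rfl
  have e3 : ∀ r, M r 3 = c3 r := fun r => by rw [← hc3]; rfl
  refine ⟨!![1, -(m1 c1) / m1 c0, -(m2 c2 c1) / m2 c0 c1, -(m3 c3 c1 c2) / m3 c0 c1 c2;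
     0, 1, -(m2 c0 c2) / m2 c0 c1, -(m3 c0 c3 c2) / m3 c0 c1 c2;
     0, 0, 1, -(m3 c0 c1 c3) / m3 c0 c1 c2; 0, 0, 0, 1], ⟨?_, ?_⟩, ?_⟩
  · intro i; fin_cases i <;> rfl
  · intro i j hij; fin_cases i <;> fin_cases j <;> first | rfl | (exact absurd hij (by decide))
  · intro i j hij
    fin_cases i <;> fin_cases j <;> first
      | (exact absurd hij (by decide))
      | (simp [Matrix.mul_apply, Fin.sum_univ_four, e0, e1, e2, e3]
         field_simp
         simp only [m1, m2, m3]
         ring)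

lemma UU_mul_upper {S : Type} [CommRing S] {M u : M4 S} (hu : UU u)
    (hM : ∀ i j : Fin 4, j < i → M i j = 0) : ∀ i j : Fin 4, j < i → (M * u) i j = 0 := by
  intro i j hij
  rw [Matrix.mul_apply]
  refine Finset.sum_eq_zero fun k _ => ?_
  rcases lt_or_ge k i with h | h
  · rw [hM i k h, zero_mul]
  · rw [hu.2 k j (lt_of_lt_of_le hij h), mul_zero]

lemma gv_minors {S : Type} [CommRing S] (A B : M4 S) :
  m1 (cl B 0) = gv A B 0 ∧ m2 (cl B 0) (cl B 1) = gv A B 1 ∧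
  m3 (cl B 0) (cl B 1) (cl B 2) = gv A B 2 ∧ m4 (cl B 0) (cl B 1) (cl B 2) (cl B 3) = gv A B 3 ∧
  m1 (cl A 0) = gv A B 4 ∧ m2 (cl A 0) (cl A 1) = gv A B 8 ∧
  m3 (cl A 0) (cl A 1) (cl A 2) = gv A B 11 ∧ m4 (cl A 0) (cl A 1) (cl A 2) (cl A 3) = gv A B 13 :=
  ⟨rfl, rfl, rfl, rfl, rfl, rfl, rfl, rfl⟩

lemma LPM_iff (A B : M4 ℂ) : LPM B ↔ gv A B 0 ≠ 0 ∧ gv A B 1 ≠ 0 ∧ gv A B 2 ≠ 0 ∧ gv A B 3 ≠ 0 :=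
  Iff.rfl
lemma LPM_iff' (A B : M4 ℂ) : LPM A ↔ gv A B 4 ≠ 0 ∧ gv A B 8 ≠ 0 ∧ gv A B 11 ≠ 0 ∧ gv A B 13 ≠ 0 :=
  Iff.rfl

lemma UU_one {S : Type} [CommRing S] : UU (1 : M4 S) :=
  ⟨fun i => by simp, fun i j h => Matrix.one_apply_ne h.ne'⟩

lemma low_left {g1 : M4 ℂ} (h : UU g1) {A : M4 ℂ} (hA : LPM A) : LPM (g1.transpose * A) := by
  rw [LPM_iff' _ A] at hA
  rw [LPM_iff' _ (g1.transpose * A), gv_low h]; exact hA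

lemma low_right {g1 : M4 ℂ} (h : UU g1) {A : M4 ℂ} (hA : LPM A) : LPM (A * g1) := by
  rw [LPM_iff' _ A] at hA
  rw [LPM_iff' _ (A * g1)]
  simpa only [gv_right h h] using hA

lemma LPM_transpose {A : M4 ℂ} (hA : LPM A) : LPM A.transpose := by
  obtain ⟨h1, h2, h3, h4⟩ := hA
  have e2 : m2 (cl A.transpose 0) (cl A.transpose 1) = m2 (cl A 0) (cl A 1) := by
    simp [m2, cl]; ring
  have e3 : m3 (cl A.transpose 0) (cl A.transpose 1) (cl A.transpose 2) =
    m3 (cl A 0) (cl A 1) (cl A 2) := by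
    simp [m3, cl]; ring
  refine ⟨h1, by rwa [e2], by rwa [e3], ?_⟩
  rw [← det4] at h4 ⊢
  rwa [Matrix.det_transpose]

lemma red_point {f : MV 4} (hf : f ∈ TA 4) (A B : M4 ℂ) (hA : LPM A) (hB : LPM B) :
    ∃ p : Fin 14 → ℂ, ev A B f = ev (A1 p) (B1 p) f := by
  obtain ⟨g1, u1, h1⟩ := col_red A.transpose (LPM_transpose hA)
  have h1' : ∀ i j : Fin 4, j < i → (g1.transpose * A) i j = 0 := by
    intro i j hij
    have := h1 j i hij
    rw [← Matrix.transpose_apply (A.transpose * g1), Matrix.transpose_mul,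
      Matrix.transpose_transpose] at this
    exact this
  obtain ⟨g2, u2, h2⟩ := col_red _ (low_left u1 hA)
  obtain ⟨g3, u3, h3⟩ := col_red _ (low_left u1 hB)
  have h2' := UU_mul_upper u2 h1'
  have hC : LPM (g1.transpose * B * g3) := low_right u3 (low_left u1 hB)
  have hI := inv_of_mem hf g1 g2 g3 u1 u2 u3 A B
  generalize g1.transpose * A * g2 = P at *
  generalize g1.transpose * B * g3 = Q at *
  have q01 := h3 0 1 (by decide); have q02 := h3 0 2 (by decide); have q03 := h3 0 3 (by decide)
  have q12 := h3 1 2 (by decide); have q13 := h3 1 3 (by decide); have q23 := h3 2 3 (by decide)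
  have p01 := h2 0 1 (by decide); have p02 := h2 0 2 (by decide); have p03 := h2 0 3 (by decide)
  have p12 := h2 1 2 (by decide); have p13 := h2 1 3 (by decide); have p23 := h2 2 3 (by decide)
  have p10 := h2' 1 0 (by decide); have p20 := h2' 2 0 (by decide); have p30 := h2' 3 0 (by decide)
  have p21 := h2' 2 1 (by decide); have p31 := h2' 3 1 (by decide); have p32 := h2' 3 2 (by decide)
  obtain ⟨r1, r2, r3, r4⟩ := hC
  have d0 : Q 0 0 ≠ 0 := r1
  have d1 : Q 1 1 ≠ 0 := by
    intro h; apply r2; simp [m2, cl, q01, h]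
  have d2 : Q 2 2 ≠ 0 := by
    intro h; apply r3; simp [m3, cl, q01, q02, q12, h]
  refine ⟨![Q 1 0 / Q 0 0, Q 2 0 / Q 0 0, Q 3 0 / Q 0 0, Q 2 1 / Q 1 1, Q 3 1 / Q 1 1,
    Q 3 2 / Q 2 2, P 0 0, P 1 1, P 2 2, P 3 3, Q 0 0, Q 1 1, Q 2 2, Q 3 3], ?_⟩
  rw [← hI]
  congr 2
  · ext i j
    fin_cases i <;> fin_cases j <;> simp [A1, p01, p02, p03, p12, p13, p23, p10, p20, p30, p21, p31, p32]
  · ext i j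
    fin_cases i <;> fin_cases j <;> simp [B1, q01, q02, q03, q12, q13, q23, d0, d1, d2]

/-- The slice homomorphism. -/
noncomputable def sg1 : MV 4 →ₐ[ℂ] MvPolynomial (Fin 14) ℂ := ev (A1 X) (B1 X)

section
variable {S : Type} [CommRing S] [Algebra ℂ S]
lemma sg1_aeval (p : Fin 14 → S) (f : MV 4) : aeval p (sg1 f) = ev (A1 p) (B1 p) f := by
  rw [sg1, ev_map]
  congr 2 <;>
  · ext i j
    fin_cases i <;> fin_cases j <;> simp [A1, B1]
end

lemma sg1_inj {f : MV 4} (hf : f ∈ TA 4) (h : sg1 f = 0) : f = 0 := by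
  have key : g 0 * g 1 * g 2 * g 3 * (g 4 * g 8 * g 11 * g 13) * f = 0 := by
    apply eq_of_ev
    intro A B
    simp only [map_mul, ev_g, map_zero]
    by_cases hB : LPM B
    · by_cases hA : LPM A
      · obtain ⟨p, hp⟩ := red_point hf A B hA hB
        rw [← sg1_aeval, h, map_zero] at hp
        rw [hp, mul_zero]
      · rw [LPM_iff' A B] at hA
        by_cases c1 : gv A B 4 = 0
        · simp [c1]
        by_cases c2 : gv A B 8 = 0
        · simp [c2]
        by_cases c3 : gv A B 11 = 0
        · simp [c3]
        by_cases c4 : gv A B 13 = 0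
        · simp [c4]
        exact absurd ⟨c1, c2, c3, c4⟩ hA
    · rw [LPM_iff A B] at hB
      by_cases c1 : gv A B 0 = 0
      · simp [c1]
      by_cases c2 : gv A B 1 = 0
      · simp [c2]
      by_cases c3 : gv A B 2 = 0
      · simp [c3]
      by_cases c4 : gv A B 3 = 0
      · simp [c4]
      exact absurd ⟨c1, c2, c3, c4⟩ hB
  rcases mul_eq_zero.mp key with h0 | h0
  · exfalso
    have := congrArg (ev (1 : M4 ℂ) 1) h0
    simp only [map_mul, ev_g, map_zero] at this
    simp [gv, m1, m2, m3, m4, cl] at this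
  · exact h0
end TA4

namespace TA4

/-- The value group. -/
abbrev Ga := Lex (Fin 14 → ℤ)
/-- The valued field. -/
abbrev KK := HahnSeries Ga ℂ

noncomputable def vv : AddValuation KK (WithTop Ga) := HahnSeries.addVal Ga ℂ

/-- `x` has order `e`. -/
def OD (x : KK) (e : Fin 14 → ℤ) : Prop := vv x = ((toLex e : Ga) : WithTop Ga)

/-- `x` has positive order. -/
def PO (x : KK) : Prop := 0 < vv x

noncomputable def tt (i : Fin 14) : KK := HahnSeries.single (toLex (Pi.single i 1)) 1

lemma OD_tt (i : Fin 14) : OD (tt i) (Pi.single i 1) := by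
  simp only [OD, vv, HahnSeries.addVal_apply, tt]
  rw [HahnSeries.orderTop_single one_ne_zero]

lemma OD.ne {x : KK} {e} (h : OD x e) : x ≠ 0 := by
  rintro rfl
  unfold OD at h
  rw [AddValuation.map_zero] at h
  exact WithTop.coe_ne_top h.symm

lemma OD.mul {x y : KK} {e e'} (h : OD x e) (h' : OD y e') : OD (x * y) (e + e') := by
  unfold OD at *
  rw [AddValuation.map_mul, h, h']; rfl

lemma OD_one : OD 1 0 := by
  unfold OD; rw [AddValuation.map_one]; rfl

lemma OD.neg {x : KK} {e} (h : OD x e) : OD (-x) e := by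
  unfold OD at *; rw [AddValuation.map_neg, h]

lemma OD.inj {x : KK} {e e'} (h : OD x e) (h' : OD x e') : e = e' := by
  unfold OD at *
  rw [h] at h'
  exact toLex.injective (WithTop.coe_injective h')

lemma OD_exists {x : KK} (h : x ≠ 0) : ∃ e, OD x e := by
  have : vv x ≠ ⊤ := fun h' => h ((AddValuation.top_iff _).mp h')
  obtain ⟨e, he⟩ := WithTop.ne_top_iff_exists.mp this
  exact ⟨ofLex e, he.symm⟩

lemma OD.inv {x : KK} {e} (h : OD x e) : OD x⁻¹ (-e) := by
  obtain ⟨e', h'⟩ := OD_exists (inv_ne_zero h.ne)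
  have := h.mul h'
  rw [mul_inv_cancel₀ h.ne] at this
  have h0 := this.inj OD_one
  rwa [neg_eq_of_add_eq_zero_right h0]

lemma OD.pow {x : KK} {e} (h : OD x e) (n : ℕ) : OD (x ^ n) (n • e) := by
  induction n with
  | zero => simpa using OD_one
  | succ n ih => rw [pow_succ, succ_nsmul]; exact ih.mul h

lemma OD_prod {ι : Type} (s : Finset ι) (x : ι → KK) (e : ι → Fin 14 → ℤ) (h : ∀ i, OD (x i) (e i)) :
    OD (∏ i ∈ s, x i) (∑ i ∈ s, e i) := by
  classical
  induction s using Finset.induction_on with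
  | empty => simpa using OD_one
  | insert a s ha ih => rw [Finset.prod_insert ha, Finset.sum_insert ha]; exact (h a).mul ih

lemma OD_C {c : ℂ} (hc : c ≠ 0) : OD (algebraMap ℂ KK c) 0 := by
  simp only [OD, vv, HahnSeries.addVal_apply]
  rw [HahnSeries.algebraMap_apply]
  simp only [HahnSeries.C_apply, Algebra.algebraMap_self, RingHom.id_apply]
  rw [HahnSeries.orderTop_single hc]; rfl

lemma PO.mul {x y : KK} (h : PO x) (h' : PO y) : PO (x * y) := by
  unfold PO at *; rw [AddValuation.map_mul]; exact lt_of_lt_of_le h (le_add_of_nonneg_right h'.le)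
lemma PO.add {x y : KK} (h : PO x) (h' : PO y) : PO (x + y) := by
  unfold PO at *; exact AddValuation.map_lt_add _ h h'
lemma PO.unit {x : KK} (h : PO x) : OD (1 + x) 0 := by
  have h1 : vv (1 : KK) = 0 := AddValuation.map_one _
  unfold OD
  rw [AddValuation.map_add_eq_of_lt_left, h1]; rfl
  rw [h1]; exact h
lemma PO_tt (i : Fin 14) : PO (tt i) := by
  have := OD_tt i
  unfold OD at this
  unfold PO
  rw [this]
  have : (0 : Ga) < toLex (Pi.single i 1) := by
    have := (Pi.lt_toLex_update_self_iff (x := (0 : Fin 14 → ℤ)) (i := i) (a := 1)).mpr one_pos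
    exact this
  exact_mod_cast this

lemma OD.congr {x : KK} {e e'} (h : OD x e) (h' : e = e') : OD x e' := h' ▸ h

/-- monomial-independent evaluation -/
lemma order_aeval (P : MvPolynomial (Fin 14) ℂ) (hP : P ≠ 0) (x : Fin 14 → KK)
    (a : Fin 14 → Fin 14 → ℤ) (hx : ∀ i, OD (x i) (a i))
    (inj : ∀ m m' : Fin 14 → ℕ, ∑ i, m i • a i = ∑ i, m' i • a i → m = m') :
    ∃ m ∈ P.support, OD (aeval x P) (∑ i, m i • a i) := by
  classical
  have hne : P.support.Nonempty := by
    rw [Finset.nonempty_iff_ne_empty]; simpa using hP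
  have ht : ∀ m ∈ P.support, OD (algebraMap ℂ KK (coeff m P) * ∏ i, x i ^ m i) (∑ i, m i • a i) := by
    intro m hm
    have := (OD_C (mem_support_iff.mp hm)).mul
      (OD_prod Finset.univ (fun i => x i ^ m i) (fun i => m i • a i) (fun i => (hx i).pow _))
    rwa [zero_add] at this
  obtain ⟨m, hm, hmin⟩ := Finset.exists_min_image P.support
    (fun m => (toLex (∑ i, m i • a i) : Ga)) hne
  refine ⟨m, hm, ?_⟩
  rw [aeval_def, eval₂_eq', ← Finset.add_sum_erase _ _ hm]
  have h1 := ht m hm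
  unfold OD at h1 ⊢
  rw [AddValuation.map_add_eq_of_lt_left, h1]
  rw [h1]
  apply AddValuation.map_lt_sum _ WithTop.coe_ne_top
  intro m' hm'
  obtain ⟨hne', hm'⟩ := Finset.mem_erase.mp hm'
  have h2 := ht m' hm'
  unfold OD at h2
  rw [h2, WithTop.coe_lt_coe]
  refine lt_of_le_of_ne (hmin m' hm') fun heq => hne' ?_
  have := inj m m' (toLex.injective heq)
  exact Finsupp.ext fun i => (congrFun this i).symm

lemma leaf {x y : KK} {e} (hx : OD x e) (hy : OD y e) :
    ∃ c : ℂ, ((toLex e : Ga) : WithTop Ga) < vv (x - algebraMap ℂ KK c * y) := by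
  have hx' : x.orderTop = ((toLex e : Ga) : WithTop Ga) := hx
  have hy' : y.orderTop = ((toLex e : Ga) : WithTop Ga) := hy
  have cy := HahnSeries.coeff_orderTop_ne hy'
  refine ⟨x.coeff (toLex e) / y.coeff (toLex e), ?_⟩
  set c := x.coeff (toLex e) / y.coeff (toLex e) with hc
  have hz : (x - algebraMap ℂ KK c * y).coeff (toLex e) = 0 := by
    rw [HahnSeries.coeff_sub, ← Algebra.smul_def, HahnSeries.coeff_smul, hc]
    simp [cy]
  have hge : ((toLex e : Ga) : WithTop Ga) ≤ vv (x - algebraMap ℂ KK c * y) := by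
    apply AddValuation.map_le_sub
    · exact hx.ge
    · by_cases h0 : c = 0
      · simp [h0]
      · have := (OD_C h0).mul hy
        rw [zero_add] at this
        exact this.ge
  refine lt_of_le_of_ne hge fun h => ?_
  exact HahnSeries.coeff_orderTop_ne (show (x - algebraMap ℂ KK c * y).orderTop = _ from h.symm) hz
end TA4

namespace TA4
set_option linter.unusedSimpArgs false

section
variable {S : Type} [CommRing S]

/-- Second slice, `x`-part. Parameters `V34,V24,V14,V23,V13,V12`. -/
def A2 (p : Fin 14 → S) : M4 S :=
  !![p 2 * p 6, p 4 * p 7, p 5 * p 8, p 9; p 1 * p 6, p 3 * p 7, p 8, 0;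
    p 0 * p 6, p 7, 0, 0; p 6, 0, 0, 0]

/-- Second slice, `y`-part. -/
def B2 (p : Fin 14 → S) : M4 S :=
  !![p 10, 0, 0, 0; 0, p 11, 0, 0; 0, 0, p 12, 0; 0, 0, 0, p 13]

/-- Third slice, `x`-part. Parameters `W34,W24,W14,W23,W13,W12`. -/
def A3 (p : Fin 14 → S) : M4 S :=
  !![p 6, -p 5 * p 7, (p 5 * p 3 - p 4) * p 8,
      (-p 2 + p 5 * p 1 + p 4 * p 0 - p 5 * p 3 * p 0) * p 9;
    0, p 7, -p 3 * p 8, (p 3 * p 0 - p 1) * p 9; 0, 0, p 8, -p 0 * p 9; 0, 0, 0, p 9]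

/-- Third slice, `y`-part. -/
def B3 (p : Fin 14 → S) : M4 S :=
  !![(-p 2 + p 5 * p 1 + p 4 * p 0 - p 5 * p 3 * p 0) * p 10, (p 5 * p 3 - p 4) * p 11,
      -p 5 * p 12, p 13;
    (p 3 * p 0 - p 1) * p 10, -p 3 * p 11, p 12, 0; -p 0 * p 10, p 11, 0, 0; p 10, 0, 0, 0]

end

/-- The slice homomorphisms. -/
noncomputable def sg2 : MV 4 →ₐ[ℂ] MvPolynomial (Fin 14) ℂ := ev (A2 X) (B2 X)
noncomputable def sg3 : MV 4 →ₐ[ℂ] MvPolynomial (Fin 14) ℂ := ev (A3 X) (B3 X)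

section
variable {S : Type} [CommRing S] [Algebra ℂ S]
lemma sg2_aeval (p : Fin 14 → S) (f : MV 4) : aeval p (sg2 f) = ev (A2 p) (B2 p) f := by
  rw [sg2, ev_map]
  congr 2 <;>
  · ext i j
    fin_cases i <;> fin_cases j <;> simp [A2, B2]
lemma sg3_aeval (p : Fin 14 → S) (f : MV 4) : aeval p (sg3 f) = ev (A3 p) (B3 p) f := by
  rw [sg3, ev_map]
  congr 2 <;>
  · ext i j
    fin_cases i <;> fin_cases j <;> simp [A3, B3]
end

section
variable {F : Type} [Field F]

/-- the three parametrisations of the generic point -/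
def pt1 (q : Fin 14 → F) : Fin 14 → F :=
  ![q 0, q 0 * q 1 * q 4, q 0 * q 1 * q 2 * q 3 * q 4 * q 5, q 1 * (1 + q 4),
    q 1 * q 2 * q 5 * (1 + (q 3 + q 3 * q 4)), q 2 * (1 + (q 5 + q 3 * q 5)),
    q 6, q 7, q 8, q 9, q 10, q 11, q 12, q 13]

def pt2 (q : Fin 14 → F) : Fin 14 → F :=
  ![-(q 2)⁻¹, (q 1 * q 2)⁻¹, -(q 0 * q 1 * q 2)⁻¹, -((q 1 * q 5)⁻¹ * (1 + q 5)),
    (q 0 * q 1 * q 4 * q 5)⁻¹ * (1 + (q 4 + q 4 * q 5)),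
    -((q 0 * q 3 * q 4)⁻¹ * (1 + (q 3 + q 3 * q 4))),
    -(q 0 * q 1 * q 2 * q 6), q 1 * q 4 * q 5 * q 7, -(q 3 * (q 1)⁻¹ * q 8),
    (q 0 * q 1 * q 2 * q 3 * q 4 * q 5)⁻¹ * q 9, q 10, q 11, q 12, q 13]

def pt3 (q : Fin 14 → F) : Fin 14 → F :=
  ![-(q 2 * q 3 * q 5)⁻¹, (q 1 * q 2 * q 4 * q 5)⁻¹, -(q 0 * q 1 * q 2)⁻¹,
    -((q 1 * q 4)⁻¹ * (1 + q 3)),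
    (q 0 * q 1)⁻¹ * (1 + (q 5 + q 3 * q 5)),
    -((q 0)⁻¹ * (1 + (q 4 + q 4 * q 5))),
    q 6, q 7, q 8, q 9,
    q 0 * q 1 * q 2 * q 3 * q 4 * q 5 * q 10, -(q 1 * (q 3)⁻¹ * q 11), (q 1 * q 4 * q 5)⁻¹ * q 12,
    -((q 0 * q 1 * q 2)⁻¹ * q 13)]

variable [Algebra ℂ F]

set_option maxHeartbeats 2000000 in
lemma slice2 {f : MV 4} (hf : f ∈ TA 4) (q : Fin 14 → F) (hq : ∀ i, q i ≠ 0) :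
    ev (A1 (pt1 q)) (B1 (pt1 q)) f = ev (A2 (pt2 q)) (B2 (pt2 q)) f := by
  have n0 := hq 0; have n1 := hq 1; have n2 := hq 2; have n3 := hq 3; have n4 := hq 4
  have n5 := hq 5; have n6 := hq 6; have n7 := hq 7; have n8 := hq 8; have n9 := hq 9
  let g1 : M4 F := !![1, pt1 q 0, pt1 q 1, pt1 q 2; 0, 1, pt1 q 3, pt1 q 4; 0, 0, 1, pt1 q 5; 0, 0, 0, 1]
  have u1 : UU g1 := by
    constructor
    · intro i; fin_cases i <;> rfl
    · intro i j hij; fin_cases i <;> fin_cases j <;> first | rfl | (exact absurd hij (by decide))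
  let g2 : M4 F := Matrix.diagonal ![(q 6)⁻¹, (q 7)⁻¹, (q 8)⁻¹, (q 9)⁻¹] * (g1.transpose * A2 (pt2 q))
  have e1 : A1 (pt1 q) * g2 = g1.transpose * A2 (pt2 q) := by
    have : A1 (pt1 q) * Matrix.diagonal ![(q 6)⁻¹, (q 7)⁻¹, (q 8)⁻¹, (q 9)⁻¹] = 1 := by
      ext i j
      rw [Matrix.mul_diagonal]
      fin_cases i <;> fin_cases j <;> simp [A1, pt1, n6, n7, n8, n9]
    rw [← Matrix.mul_assoc, this, Matrix.one_mul]
  have e2 : B1 (pt1 q) = g1.transpose * B2 (pt2 q) := by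
    ext i j
    fin_cases i <;> fin_cases j <;>
      simp [B1, pt1, g1, B2, pt2, Matrix.mul_apply, Fin.sum_univ_four]
  have u2 : UU g2 := by
    constructor
    · intro i; simp only [g2, Matrix.diagonal_mul, Matrix.mul_apply, Fin.sum_univ_four]
      fin_cases i <;> simp [g1, A2, pt1, pt2] <;> field_simp <;> ring
    · intro i j hij; simp only [g2, Matrix.diagonal_mul, Matrix.mul_apply, Fin.sum_univ_four]
      fin_cases i <;> fin_cases j <;> first
       | exact absurd hij (by decide)
       | (simp [g1, A2, pt1, pt2, n6, n7, n8, n9]; done)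
       | (simp [g1, A2, pt1, pt2, n6, n7, n8, n9]; field_simp; ring)
  have h1 := inv_of_mem hf g1 1 1 u1 UU_one UU_one (A2 (pt2 q)) (B2 (pt2 q))
  have h2 := inv_of_mem hf 1 g2 1 UU_one u2 UU_one (A1 (pt1 q)) (B1 (pt1 q))
  rw [Matrix.mul_one, Matrix.mul_one] at h1
  rw [Matrix.transpose_one, Matrix.one_mul, Matrix.one_mul, Matrix.mul_one, e1] at h2
  rw [← h1, ← h2, e2]

set_option maxHeartbeats 2000000 in
lemma slice3 {f : MV 4} (hf : f ∈ TA 4) (q : Fin 14 → F) (hq : ∀ i, q i ≠ 0) :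
    ev (A1 (pt1 q)) (B1 (pt1 q)) f = ev (A3 (pt3 q)) (B3 (pt3 q)) f := by
  have n0 := hq 0; have n1 := hq 1; have n2 := hq 2; have n3 := hq 3; have n4 := hq 4
  have n5 := hq 5; have n6 := hq 6; have n7 := hq 7; have n8 := hq 8; have n9 := hq 9
  have n10 := hq 10; have n11 := hq 11; have n12 := hq 12; have n13 := hq 13
  let Li : M4 F := !![1, 0, 0, 0; - q 0, 1, 0, 0; q 0 * q 1, - (q 1 * (1 + q 4)), 1, 0;
    - (q 0 * q 1 * q 2), q 1 * q 2 * (1 + q 4 + q 4 * q 5), - (q 2 * (1 + q 5 + q 3 * q 5)), 1]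
  let D : M4 F := Matrix.diagonal ![(q 10)⁻¹, (q 11)⁻¹, (q 12)⁻¹, (q 13)⁻¹]
  let g2 : M4 F := Matrix.diagonal ![(q 6)⁻¹, (q 7)⁻¹, (q 8)⁻¹, (q 9)⁻¹] * A3 (pt3 q)
  let g3 : M4 F := D * (Li * B3 (pt3 q))
  have e1 : A1 (pt1 q) * g2 = A3 (pt3 q) := by
    have : A1 (pt1 q) * Matrix.diagonal ![(q 6)⁻¹, (q 7)⁻¹, (q 8)⁻¹, (q 9)⁻¹] = 1 := by
      ext i j
      rw [Matrix.mul_diagonal]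
      fin_cases i <;> fin_cases j <;> simp [A1, pt1, n6, n7, n8, n9]
    rw [← Matrix.mul_assoc, this, Matrix.one_mul]
  have e2 : B1 (pt1 q) * g3 = B3 (pt3 q) := by
    have : B1 (pt1 q) * D * Li = 1 := by
      ext i j
      rw [Matrix.mul_apply]
      simp only [D, Matrix.mul_diagonal, Fin.sum_univ_four]
      fin_cases i <;> fin_cases j <;> first
       | (simp [B1, pt1, Li, n10, n11, n12, n13]; done)
       | (simp [B1, pt1, Li, n10, n11, n12, n13]; field_simp; ring)
    rw [← Matrix.mul_assoc, ← Matrix.mul_assoc, this, Matrix.one_mul]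
  have u2 : UU g2 := by
    constructor
    · intro i; simp only [g2, Matrix.diagonal_mul]
      fin_cases i <;> simp [A3, pt3, n6, n7, n8, n9]
    · intro i j hij; simp only [g2, Matrix.diagonal_mul]
      fin_cases i <;> fin_cases j <;> first
       | exact absurd hij (by decide)
       | (simp [A3]; done)
  have u3 : UU g3 := by
    constructor
    · intro i; simp only [g3, D, Matrix.diagonal_mul, Matrix.mul_apply, Fin.sum_univ_four]
      fin_cases i <;> simp [Li, B3, pt3] <;> field_simp <;> ring
    · intro i j hij; simp only [g3, D, Matrix.diagonal_mul, Matrix.mul_apply, Fin.sum_univ_four]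
      fin_cases i <;> fin_cases j <;> first
       | exact absurd hij (by decide)
       | (simp [Li, B3, pt3, n10, n11, n12, n13]; done)
       | (simp [Li, B3, pt3, n10, n11, n12, n13]; field_simp; ring)
  have h2 := inv_of_mem hf 1 g2 g3 UU_one u2 u3 (A1 (pt1 q)) (B1 (pt1 q))
  rw [Matrix.transpose_one, Matrix.one_mul, Matrix.one_mul, e1, e2] at h2
  rw [← h2]
end
end TA4

namespace TA4
set_option linter.unusedSimpArgs false

/-- Orders of the parameters of the three slices and of the generators. -/
def o1 : Fin 14 → Fin 14 → ℤ :=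
  ![![1, 0, 0, 0, 0, 0, 0, 0, 0, 0, 0, 0, 0, 0],
    ![1, 1, 0, 0, 1, 0, 0, 0, 0, 0, 0, 0, 0, 0],
    ![1, 1, 1, 1, 1, 1, 0, 0, 0, 0, 0, 0, 0, 0],
    ![0, 1, 0, 0, 0, 0, 0, 0, 0, 0, 0, 0, 0, 0],
    ![0, 1, 1, 0, 0, 1, 0, 0, 0, 0, 0, 0, 0, 0],
    ![0, 0, 1, 0, 0, 0, 0, 0, 0, 0, 0, 0, 0, 0],
    ![0, 0, 0, 0, 0, 0, 1, 0, 0, 0, 0, 0, 0, 0],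
    ![0, 0, 0, 0, 0, 0, 0, 1, 0, 0, 0, 0, 0, 0],
    ![0, 0, 0, 0, 0, 0, 0, 0, 1, 0, 0, 0, 0, 0],
    ![0, 0, 0, 0, 0, 0, 0, 0, 0, 1, 0, 0, 0, 0],
    ![0, 0, 0, 0, 0, 0, 0, 0, 0, 0, 1, 0, 0, 0],
    ![0, 0, 0, 0, 0, 0, 0, 0, 0, 0, 0, 1, 0, 0],
    ![0, 0, 0, 0, 0, 0, 0, 0, 0, 0, 0, 0, 1, 0],
    ![0, 0, 0, 0, 0, 0, 0, 0, 0, 0, 0, 0, 0, 1]]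

def o2 : Fin 14 → Fin 14 → ℤ :=
  ![![0, 0, -1, 0, 0, 0, 0, 0, 0, 0, 0, 0, 0, 0],
    ![0, -1, -1, 0, 0, 0, 0, 0, 0, 0, 0, 0, 0, 0],
    ![-1, -1, -1, 0, 0, 0, 0, 0, 0, 0, 0, 0, 0, 0],
    ![0, -1, 0, 0, 0, -1, 0, 0, 0, 0, 0, 0, 0, 0],
    ![-1, -1, 0, 0, -1, -1, 0, 0, 0, 0, 0, 0, 0, 0],
    ![-1, 0, 0, -1, -1, 0, 0, 0, 0, 0, 0, 0, 0, 0],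
    ![1, 1, 1, 0, 0, 0, 1, 0, 0, 0, 0, 0, 0, 0],
    ![0, 1, 0, 0, 1, 1, 0, 1, 0, 0, 0, 0, 0, 0],
    ![0, -1, 0, 1, 0, 0, 0, 0, 1, 0, 0, 0, 0, 0],
    ![-1, -1, -1, -1, -1, -1, 0, 0, 0, 1, 0, 0, 0, 0],
    ![0, 0, 0, 0, 0, 0, 0, 0, 0, 0, 1, 0, 0, 0],
    ![0, 0, 0, 0, 0, 0, 0, 0, 0, 0, 0, 1, 0, 0],
    ![0, 0, 0, 0, 0, 0, 0, 0, 0, 0, 0, 0, 1, 0],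
    ![0, 0, 0, 0, 0, 0, 0, 0, 0, 0, 0, 0, 0, 1]]

def o3 : Fin 14 → Fin 14 → ℤ :=
  ![![0, 0, -1, -1, 0, -1, 0, 0, 0, 0, 0, 0, 0, 0],
    ![0, -1, -1, 0, -1, -1, 0, 0, 0, 0, 0, 0, 0, 0],
    ![-1, -1, -1, 0, 0, 0, 0, 0, 0, 0, 0, 0, 0, 0],
    ![0, -1, 0, 0, -1, 0, 0, 0, 0, 0, 0, 0, 0, 0],
    ![-1, -1, 0, 0, 0, 0, 0, 0, 0, 0, 0, 0, 0, 0],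
    ![-1, 0, 0, 0, 0, 0, 0, 0, 0, 0, 0, 0, 0, 0],
    ![0, 0, 0, 0, 0, 0, 1, 0, 0, 0, 0, 0, 0, 0],
    ![0, 0, 0, 0, 0, 0, 0, 1, 0, 0, 0, 0, 0, 0],
    ![0, 0, 0, 0, 0, 0, 0, 0, 1, 0, 0, 0, 0, 0],
    ![0, 0, 0, 0, 0, 0, 0, 0, 0, 1, 0, 0, 0, 0],
    ![1, 1, 1, 1, 1, 1, 0, 0, 0, 0, 1, 0, 0, 0],
    ![0, 1, 0, -1, 0, 0, 0, 0, 0, 0, 0, 1, 0, 0],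
    ![0, -1, 0, 0, -1, -1, 0, 0, 0, 0, 0, 0, 1, 0],
    ![-1, -1, -1, 0, 0, 0, 0, 0, 0, 0, 0, 0, 0, 1]]

def vg : Fin 20 → Fin 14 → ℤ :=
  ![![0, 0, 0, 0, 0, 0, 0, 0, 0, 0, 1, 0, 0, 0],
    ![0, 0, 0, 0, 0, 0, 0, 0, 0, 0, 1, 1, 0, 0],
    ![0, 0, 0, 0, 0, 0, 0, 0, 0, 0, 1, 1, 1, 0],
    ![0, 0, 0, 0, 0, 0, 0, 0, 0, 0, 1, 1, 1, 1],
    ![0, 0, 0, 0, 0, 0, 1, 0, 0, 0, 0, 0, 0, 0],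
    ![1, 0, 0, 0, 0, 0, 1, 0, 0, 0, 1, 0, 0, 0],
    ![1, 1, 0, 0, 0, 0, 1, 0, 0, 0, 1, 1, 0, 0],
    ![1, 1, 1, 0, 0, 0, 1, 0, 0, 0, 1, 1, 1, 0],
    ![0, 0, 0, 0, 0, 0, 1, 1, 0, 0, 0, 0, 0, 0],
    ![1, 1, 0, 0, 1, 0, 1, 1, 0, 0, 1, 0, 0, 0],
    ![1, 2, 1, 0, 1, 1, 1, 1, 0, 0, 1, 1, 0, 0],
    ![0, 0, 0, 0, 0, 0, 1, 1, 1, 0, 0, 0, 0, 0],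
    ![1, 1, 1, 1, 1, 1, 1, 1, 1, 0, 1, 0, 0, 0],
    ![0, 0, 0, 0, 0, 0, 1, 1, 1, 1, 0, 0, 0, 0],
    ![0, 1, 0, 0, 0, 0, 1, 1, 0, 0, 1, 1, 0, 0],
    ![0, 1, 1, 0, 0, 0, 1, 1, 0, 0, 1, 1, 1, 0],
    ![1, 1, 1, 0, 1, 0, 1, 1, 0, 0, 2, 1, 1, 0],
    ![0, 1, 1, 0, 0, 1, 1, 1, 1, 0, 1, 1, 0, 0],
    ![0, 0, 1, 0, 0, 0, 1, 1, 1, 0, 1, 1, 1, 0],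
    ![1, 1, 1, 0, 0, 1, 2, 1, 1, 0, 1, 1, 0, 0]]


section
variable {F : Type} [Field F]

/-- explicit values of the generators at the generic point -/
def ex (q : Fin 14 → F) : Fin 20 → F :=
  ![q 10, q 10 * q 11, q 10 * q 11 * q 12, q 10 * q 11 * q 12 * q 13,
    q 6, q 6 * q 10 * q 0, q 6 * q 10 * q 11 * q 0 * q 1, q 6 * q 10 * q 11 * q 12 * q 0 * q 1 * q 2,
    q 6 * q 7, q 6 * q 7 * q 10 * q 0 * q 1 * q 4,
    q 6 * q 7 * q 10 * q 11 * q 0 * q 1 * q 1 * q 2 * q 4 * q 5,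
    q 6 * q 7 * q 8, q 6 * q 7 * q 8 * q 10 * q 0 * q 1 * q 2 * q 3 * q 4 * q 5,
    q 6 * q 7 * q 8 * q 9,
    q 6 * q 7 * q 10 * q 11 * q 1 * (1 + q 4),
    q 6 * q 7 * q 10 * q 11 * q 12 * q 1 * q 2 * (1 + (q 4 + q 4 * q 5)),
    q 6 * q 7 * q 10 * q 12 * q 10 * q 11 * q 0 * q 1 * q 2 * q 4 * (1 + q 5),
    q 6 * q 7 * q 8 * q 10 * q 11 * q 1 * q 2 * q 5 * (1 + (q 3 + q 3 * q 4)),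
    q 6 * q 7 * q 8 * q 10 * q 11 * q 12 * q 2 * (1 + (q 5 + q 3 * q 5)),
    q 6 * q 6 * q 7 * q 8 * q 10 * q 11 * q 0 * q 1 * q 2 * q 5 * (1 + q 3)]

lemma gv_ex (q : Fin 14 → F) (j : Fin 20) : gv (A1 (pt1 q)) (B1 (pt1 q)) j = ex q j := by
  fin_cases j <;> simp [gv, ex, m1, m2, m3, m4, cl, A1, B1, pt1] <;> ring
end

/-- formal rules for computing orders -/
structure OSys {F : Type} [Field F] (O : F → (Fin 14 → ℤ) → Prop) (P : F → Prop)
    (t : Fin 14 → F) : Prop where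
  mul : ∀ {x y e e'}, O x e → O y e' → O (x * y) (e + e')
  neg : ∀ {x e}, O x e → O (-x) e
  inv : ∀ {x e}, O x e → O x⁻¹ (-e)
  unit : ∀ {x}, P x → O (1 + x) 0
  pmul : ∀ {x y}, P x → P y → P (x * y)
  padd : ∀ {x y}, P x → P y → P (x + y)
  gen : ∀ i, O (t i) (Pi.single i 1)
  pgen : ∀ i, P (t i)

lemma OSys_KK : OSys OD PO tt where
  mul := OD.mul
  neg := OD.neg
  inv := OD.inv
  unit := PO.unit
  pmul := PO.mul
  padd := PO.add
  gen := OD_tt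
  pgen := PO_tt

lemma O_congr {F : Type} {O : F → (Fin 14 → ℤ) → Prop} {x : F} {e e' : Fin 14 → ℤ} (h : O x e)
    (h' : e = e') : O x e' := h' ▸ h

section
variable {F : Type} [Field F] {O : F → (Fin 14 → ℤ) → Prop} {P : F → Prop} {t : Fin 14 → F}
lemma O_ex (H : OSys O P t) (j : Fin 20) : O (ex t j) (vg j) := by
  fin_cases j <;>
    simp only [ex, vg, Fin.mk_zero, Fin.mk_one, Fin.reduceFinMk, Fin.zero_eta, Matrix.cons_val]
  all_goals
    apply O_congr
    · repeat' first
        | with_reducible exact H.gen _ | with_reducible exact H.pgen _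
        | with_reducible apply H.unit | with_reducible apply H.mul
        | with_reducible apply H.neg | with_reducible apply H.inv
        | with_reducible apply H.pmul | with_reducible apply H.padd
    · decide

lemma O_pt1 (H : OSys O P t) (j : Fin 14) : O (pt1 t j) (o1 j) := by
  fin_cases j <;>
    simp only [pt1, o1, Fin.mk_zero, Fin.mk_one, Fin.reduceFinMk, Fin.zero_eta, Matrix.cons_val]
  all_goals
    apply O_congr
    · repeat' first
        | with_reducible exact H.gen _ | with_reducible exact H.pgen _
        | with_reducible apply H.unit | with_reducible apply H.mul
        | with_reducible apply H.neg | with_reducible apply H.inv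
        | with_reducible apply H.pmul | with_reducible apply H.padd
    · decide

lemma O_pt2 (H : OSys O P t) (j : Fin 14) : O (pt2 t j) (o2 j) := by
  fin_cases j <;>
    simp only [pt2, o2, Fin.mk_zero, Fin.mk_one, Fin.reduceFinMk, Fin.zero_eta, Matrix.cons_val]
  all_goals
    apply O_congr
    · repeat' first
        | with_reducible exact H.gen _ | with_reducible exact H.pgen _
        | with_reducible apply H.unit | with_reducible apply H.mul
        | with_reducible apply H.neg | with_reducible apply H.inv
        | with_reducible apply H.pmul | with_reducible apply H.padd
    · decide

lemma O_pt3 (H : OSys O P t) (j : Fin 14) : O (pt3 t j) (o3 j) := by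
  fin_cases j <;>
    simp only [pt3, o3, Fin.mk_zero, Fin.mk_one, Fin.reduceFinMk, Fin.zero_eta, Matrix.cons_val]
  all_goals
    apply O_congr
    · repeat' first
        | with_reducible exact H.gen _ | with_reducible exact H.pgen _
        | with_reducible apply H.unit | with_reducible apply H.mul
        | with_reducible apply H.neg | with_reducible apply H.inv
        | with_reducible apply H.pmul | with_reducible apply H.padd
    · decide

end
end TA4

namespace TA4
set_option linter.unusedSimpArgs false

lemma sum20 (f : Fin 20 → ℤ) : ∑ i, f i = f 0 + f 1 + f 2 + f 3 + f 4 + f 5 + f 6 + f 7 + f 8 + f 9 + f 10 + f 11 + f 12 + f 13 + f 14 + f 15 + f 16 + f 17 + f 18 + f 19 := by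
  simp [Fin.sum_univ_succ]; ring
lemma sum14 (f : Fin 14 → ℤ) : ∑ i, f i = f 0 + f 1 + f 2 + f 3 + f 4 + f 5 + f 6 + f 7 + f 8 + f 9 + f 10 + f 11 + f 12 + f 13 := by
  simp [Fin.sum_univ_succ]; ring

lemma lin_o1 (m : Fin 14 → ℕ) : (∑ i, m i • o1 i) = ![
    (m 0 : ℤ) + (m 1 : ℤ) + (m 2 : ℤ),
    (m 1 : ℤ) + (m 2 : ℤ) + (m 3 : ℤ) + (m 4 : ℤ),
    (m 2 : ℤ) + (m 4 : ℤ) + (m 5 : ℤ),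
    (m 2 : ℤ),
    (m 1 : ℤ) + (m 2 : ℤ),
    (m 2 : ℤ) + (m 4 : ℤ),
    (m 6 : ℤ),
    (m 7 : ℤ),
    (m 8 : ℤ),
    (m 9 : ℤ),
    (m 10 : ℤ),
    (m 11 : ℤ),
    (m 12 : ℤ),
    (m 13 : ℤ)] := by
  funext k
  rw [Finset.sum_apply, sum14]
  simp only [Pi.smul_apply, nsmul_eq_mul]
  fin_cases k <;> simp [o1] <;> ring

lemma lin_o2 (m : Fin 14 → ℕ) : (∑ i, m i • o2 i) = ![
    -(m 2 : ℤ) - (m 4 : ℤ) - (m 5 : ℤ) + (m 6 : ℤ) - (m 9 : ℤ),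
    -(m 1 : ℤ) - (m 2 : ℤ) - (m 3 : ℤ) - (m 4 : ℤ) + (m 6 : ℤ) + (m 7 : ℤ) - (m 8 : ℤ) - (m 9 : ℤ),
    -(m 0 : ℤ) - (m 1 : ℤ) - (m 2 : ℤ) + (m 6 : ℤ) - (m 9 : ℤ),
    -(m 5 : ℤ) + (m 8 : ℤ) - (m 9 : ℤ),
    -(m 4 : ℤ) - (m 5 : ℤ) + (m 7 : ℤ) - (m 9 : ℤ),
    -(m 3 : ℤ) - (m 4 : ℤ) + (m 7 : ℤ) - (m 9 : ℤ),
    (m 6 : ℤ),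
    (m 7 : ℤ),
    (m 8 : ℤ),
    (m 9 : ℤ),
    (m 10 : ℤ),
    (m 11 : ℤ),
    (m 12 : ℤ),
    (m 13 : ℤ)] := by
  funext k
  rw [Finset.sum_apply, sum14]
  simp only [Pi.smul_apply, nsmul_eq_mul]
  fin_cases k <;> simp [o2] <;> ring

lemma lin_o3 (m : Fin 14 → ℕ) : (∑ i, m i • o3 i) = ![
    -(m 2 : ℤ) - (m 4 : ℤ) - (m 5 : ℤ) + (m 10 : ℤ) - (m 13 : ℤ),
    -(m 1 : ℤ) - (m 2 : ℤ) - (m 3 : ℤ) - (m 4 : ℤ) + (m 10 : ℤ) + (m 11 : ℤ) - (m 12 : ℤ) - (m 13 : ℤ),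
    -(m 0 : ℤ) - (m 1 : ℤ) - (m 2 : ℤ) + (m 10 : ℤ) - (m 13 : ℤ),
    -(m 0 : ℤ) + (m 10 : ℤ) - (m 11 : ℤ),
    -(m 1 : ℤ) - (m 3 : ℤ) + (m 10 : ℤ) - (m 12 : ℤ),
    -(m 0 : ℤ) - (m 1 : ℤ) + (m 10 : ℤ) - (m 12 : ℤ),
    (m 6 : ℤ),
    (m 7 : ℤ),
    (m 8 : ℤ),
    (m 9 : ℤ),
    (m 10 : ℤ),
    (m 11 : ℤ),
    (m 12 : ℤ),
    (m 13 : ℤ)] := by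
  funext k
  rw [Finset.sum_apply, sum14]
  simp only [Pi.smul_apply, nsmul_eq_mul]
  fin_cases k <;> simp [o3] <;> ring

lemma lin_vg (m : Fin 20 → ℕ) : (∑ i, m i • vg i) = ![
    (m 5 : ℤ) + (m 6 : ℤ) + (m 7 : ℤ) + (m 9 : ℤ) + (m 10 : ℤ) + (m 12 : ℤ) + (m 16 : ℤ) + (m 19 : ℤ),
    (m 6 : ℤ) + (m 7 : ℤ) + (m 9 : ℤ) + 2 * (m 10 : ℤ) + (m 12 : ℤ) + (m 14 : ℤ) + (m 15 : ℤ) + (m 16 : ℤ) + (m 17 : ℤ) + (m 19 : ℤ),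
    (m 7 : ℤ) + (m 10 : ℤ) + (m 12 : ℤ) + (m 15 : ℤ) + (m 16 : ℤ) + (m 17 : ℤ) + (m 18 : ℤ) + (m 19 : ℤ),
    (m 12 : ℤ),
    (m 9 : ℤ) + (m 10 : ℤ) + (m 12 : ℤ) + (m 16 : ℤ),
    (m 10 : ℤ) + (m 12 : ℤ) + (m 17 : ℤ) + (m 19 : ℤ),
    (m 4 : ℤ) + (m 5 : ℤ) + (m 6 : ℤ) + (m 7 : ℤ) + (m 8 : ℤ) + (m 9 : ℤ) + (m 10 : ℤ) + (m 11 : ℤ) + (m 12 : ℤ) + (m 13 : ℤ) + (m 14 : ℤ) + (m 15 : ℤ) + (m 16 : ℤ) + (m 17 : ℤ) + (m 18 : ℤ) + 2 * (m 19 : ℤ),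
    (m 8 : ℤ) + (m 9 : ℤ) + (m 10 : ℤ) + (m 11 : ℤ) + (m 12 : ℤ) + (m 13 : ℤ) + (m 14 : ℤ) + (m 15 : ℤ) + (m 16 : ℤ) + (m 17 : ℤ) + (m 18 : ℤ) + (m 19 : ℤ),
    (m 11 : ℤ) + (m 12 : ℤ) + (m 13 : ℤ) + (m 17 : ℤ) + (m 18 : ℤ) + (m 19 : ℤ),
    (m 13 : ℤ),
    (m 0 : ℤ) + (m 1 : ℤ) + (m 2 : ℤ) + (m 3 : ℤ) + (m 5 : ℤ) + (m 6 : ℤ) + (m 7 : ℤ) + (m 9 : ℤ) + (m 10 : ℤ) + (m 12 : ℤ) + (m 14 : ℤ) + (m 15 : ℤ) + 2 * (m 16 : ℤ) + (m 17 : ℤ) + (m 18 : ℤ) + (m 19 : ℤ),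
    (m 1 : ℤ) + (m 2 : ℤ) + (m 3 : ℤ) + (m 6 : ℤ) + (m 7 : ℤ) + (m 10 : ℤ) + (m 14 : ℤ) + (m 15 : ℤ) + (m 16 : ℤ) + (m 17 : ℤ) + (m 18 : ℤ) + (m 19 : ℤ),
    (m 2 : ℤ) + (m 3 : ℤ) + (m 7 : ℤ) + (m 15 : ℤ) + (m 16 : ℤ) + (m 18 : ℤ),
    (m 3 : ℤ)] := by
  funext k
  rw [Finset.sum_apply, sum20]
  simp only [Pi.smul_apply, nsmul_eq_mul]
  fin_cases k <;> simp [vg] <;> ring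

lemma inj_o1 (m m' : Fin 14 → ℕ) (h : ∑ i, m i • o1 i = ∑ i, m' i • o1 i) : m = m' := by
  rw [lin_o1, lin_o1] at h
  have h0 := congrFun h 0
  have h1 := congrFun h 1
  have h2 := congrFun h 2
  have h3 := congrFun h 3
  have h4 := congrFun h 4
  have h5 := congrFun h 5
  have h6 := congrFun h 6
  have h7 := congrFun h 7
  have h8 := congrFun h 8
  have h9 := congrFun h 9
  have h10 := congrFun h 10
  have h11 := congrFun h 11
  have h12 := congrFun h 12
  have h13 := congrFun h 13
  simp only [Matrix.cons_val] at h0 h1 h2 h3 h4 h5 h6 h7 h8 h9 h10 h11 h12 h13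
  clear h
  funext i
  fin_cases i <;> simp only [Fin.mk_zero, Fin.mk_one, Fin.reduceFinMk, Fin.zero_eta] <;> omega

lemma inj_o2 (m m' : Fin 14 → ℕ) (h : ∑ i, m i • o2 i = ∑ i, m' i • o2 i) : m = m' := by
  rw [lin_o2, lin_o2] at h
  have h0 := congrFun h 0
  have h1 := congrFun h 1
  have h2 := congrFun h 2
  have h3 := congrFun h 3
  have h4 := congrFun h 4
  have h5 := congrFun h 5
  have h6 := congrFun h 6
  have h7 := congrFun h 7
  have h8 := congrFun h 8
  have h9 := congrFun h 9
  have h10 := congrFun h 10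
  have h11 := congrFun h 11
  have h12 := congrFun h 12
  have h13 := congrFun h 13
  simp only [Matrix.cons_val] at h0 h1 h2 h3 h4 h5 h6 h7 h8 h9 h10 h11 h12 h13
  clear h
  funext i
  fin_cases i <;> simp only [Fin.mk_zero, Fin.mk_one, Fin.reduceFinMk, Fin.zero_eta] <;> omega

lemma inj_o3 (m m' : Fin 14 → ℕ) (h : ∑ i, m i • o3 i = ∑ i, m' i • o3 i) : m = m' := by
  rw [lin_o3, lin_o3] at h
  have h0 := congrFun h 0
  have h1 := congrFun h 1
  have h2 := congrFun h 2
  have h3 := congrFun h 3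
  have h4 := congrFun h 4
  have h5 := congrFun h 5
  have h6 := congrFun h 6
  have h7 := congrFun h 7
  have h8 := congrFun h 8
  have h9 := congrFun h 9
  have h10 := congrFun h 10
  have h11 := congrFun h 11
  have h12 := congrFun h 12
  have h13 := congrFun h 13
  simp only [Matrix.cons_val] at h0 h1 h2 h3 h4 h5 h6 h7 h8 h9 h10 h11 h12 h13
  clear h
  funext i
  fin_cases i <;> simp only [Fin.mk_zero, Fin.mk_one, Fin.reduceFinMk, Fin.zero_eta] <;> omega

end TA4

namespace TA4
set_option linter.unusedSimpArgs false

lemma chamber (z31 z22 z21 z13 z12 z11 z40 z30 z20 z10 z04 z03 z02 z01 : ℤ)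
    (i0 : 0 ≤ z13)
    (i1 : 0 ≤ z13 + z12)
    (i2 : 0 ≤ z13 + z12 + z11)
    (i3 : 0 ≤ z22)
    (i4 : 0 ≤ z22 + z21)
    (i5 : 0 ≤ z31)
    (i6 : 0 ≤ z30)
    (i7 : 0 ≤ z30 + z21)
    (i8 : 0 ≤ z30 + z21 + z12)
    (i9 : 0 ≤ z20)
    (i10 : 0 ≤ z20 + z11)
    (i11 : 0 ≤ z10)
    (i12 : 0 ≤ z01)
    (i13 : 0 ≤ z01 + z11)
    (i14 : 0 ≤ z01 + z11 + z21)
    (i15 : 0 ≤ z02)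
    (i16 : 0 ≤ z02 + z12)
    (i17 : 0 ≤ z03)
    (i18 : 0 ≤ z04)
    (i19 : 0 ≤ z40)
    : ∃ k : Fin 20 → ℕ,
      (k 5 : ℤ) - k 14 - k 15 + k 19 = z11 ∧ (k 6 : ℤ) + k 14 - k 16 - k 18 = z12 ∧
      (k 9 : ℤ) + k 16 - k 19 - k 17 = z21 ∧
      (k 7 : ℤ) + k 16 + k 15 + k 18 = z13 ∧ (k 10 : ℤ) + k 19 + k 17 = z22 ∧
      (k 11 : ℤ) + k 19 + k 17 + k 18 = z30 ∧ (k 8 : ℤ) + k 14 + k 15 = z20 ∧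
      (k 0 : ℤ) + k 14 + k 15 + k 17 = z01 ∧ (k 1 : ℤ) + k 16 + k 18 = z02 ∧
      (k 2 : ℤ) = z03 ∧ (k 3 : ℤ) = z04 ∧ (k 4 : ℤ) = z10 ∧ (k 12 : ℤ) = z31 ∧ (k 13 : ℤ) = z40 := by
  obtain ⟨k19, hk19⟩ : ∃ t : ℕ, (t : ℤ) = min (max z11 0) (max (-z21) 0) := ⟨_, Int.toNat_of_nonneg (by omega)⟩
  obtain ⟨k16, hk16⟩ : ∃ t : ℕ, (t : ℤ) = min (max z21 0) (max (-z12) 0) := ⟨_, Int.toNat_of_nonneg (by omega)⟩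
  obtain ⟨k14, hk14⟩ : ∃ t : ℕ, (t : ℤ) = min (max z12 0) (max (-z11) 0) := ⟨_, Int.toNat_of_nonneg (by omega)⟩
  obtain ⟨k5, hk5⟩ : ∃ t : ℕ, (t : ℤ) = max z11 0 - k19 := ⟨_, Int.toNat_of_nonneg (by omega)⟩
  obtain ⟨k15, hk15⟩ : ∃ t : ℕ, (t : ℤ) = max (-z11) 0 - k14 := ⟨_, Int.toNat_of_nonneg (by omega)⟩
  obtain ⟨k6, hk6⟩ : ∃ t : ℕ, (t : ℤ) = max z12 0 - k14 := ⟨_, Int.toNat_of_nonneg (by omega)⟩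
  obtain ⟨k18, hk18⟩ : ∃ t : ℕ, (t : ℤ) = max (-z12) 0 - k16 := ⟨_, Int.toNat_of_nonneg (by omega)⟩
  obtain ⟨k9, hk9⟩ : ∃ t : ℕ, (t : ℤ) = max z21 0 - k16 := ⟨_, Int.toNat_of_nonneg (by omega)⟩
  obtain ⟨k17, hk17⟩ : ∃ t : ℕ, (t : ℤ) = max (-z21) 0 - k19 := ⟨_, Int.toNat_of_nonneg (by omega)⟩
  refine ⟨![(z01 - k14 - k15 - k17).toNat, (z02 - k16 - k18).toNat, z03.toNat, z04.toNat, z10.toNat,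
    k5, k6, (z13 - k16 - k15 - k18).toNat, (z20 - k14 - k15).toNat, k9, (z22 - k19 - k17).toNat,
    (z30 - k19 - k17 - k18).toNat, z31.toNat, z40.toNat, k14, k15, k16, k17, k18, k19], ?_⟩
  simp only [Matrix.cons_val]
  refine ⟨?_, ?_, ?_, ?_, ?_, ?_, ?_, ?_, ?_, ?_, ?_, ?_, ?_, ?_⟩ <;> omega

set_option maxHeartbeats 4000000 in
lemma comb (n : Fin 14 → ℤ) (m1 m2 m3 : Fin 14 → ℕ) (h1 : ∑ i, m1 i • o1 i = n)
    (h2 : ∑ i, m2 i • o2 i = n) (h3 : ∑ i, m3 i • o3 i = n) :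
    ∃ k : Fin 20 → ℕ, ∑ i, k i • vg i = n := by
  rw [lin_o1] at h1
  rw [lin_o2] at h2
  rw [lin_o3] at h3
  have e1_0 := congrFun h1 0
  have e1_1 := congrFun h1 1
  have e1_2 := congrFun h1 2
  have e1_3 := congrFun h1 3
  have e1_4 := congrFun h1 4
  have e1_5 := congrFun h1 5
  have e1_6 := congrFun h1 6
  have e1_7 := congrFun h1 7
  have e1_8 := congrFun h1 8
  have e1_9 := congrFun h1 9
  have e1_10 := congrFun h1 10
  have e1_11 := congrFun h1 11
  have e1_12 := congrFun h1 12
  have e1_13 := congrFun h1 13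
  have e2_0 := congrFun h2 0
  have e2_1 := congrFun h2 1
  have e2_2 := congrFun h2 2
  have e2_3 := congrFun h2 3
  have e2_4 := congrFun h2 4
  have e2_5 := congrFun h2 5
  have e2_6 := congrFun h2 6
  have e2_7 := congrFun h2 7
  have e2_8 := congrFun h2 8
  have e2_9 := congrFun h2 9
  have e2_10 := congrFun h2 10
  have e2_11 := congrFun h2 11
  have e2_12 := congrFun h2 12
  have e2_13 := congrFun h2 13
  have e3_0 := congrFun h3 0
  have e3_1 := congrFun h3 1
  have e3_2 := congrFun h3 2
  have e3_3 := congrFun h3 3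
  have e3_4 := congrFun h3 4
  have e3_5 := congrFun h3 5
  have e3_6 := congrFun h3 6
  have e3_7 := congrFun h3 7
  have e3_8 := congrFun h3 8
  have e3_9 := congrFun h3 9
  have e3_10 := congrFun h3 10
  have e3_11 := congrFun h3 11
  have e3_12 := congrFun h3 12
  have e3_13 := congrFun h3 13
  simp only [Matrix.cons_val] at e1_0 e1_1 e1_2 e1_3 e1_4 e1_5 e1_6 e1_7 e1_8 e1_9 e1_10 e1_11 e1_12 e1_13 e2_0 e2_1 e2_2 e2_3 e2_4 e2_5 e2_6 e2_7 e2_8 e2_9 e2_10 e2_11 e2_12 e2_13 e3_0 e3_1 e3_2 e3_3 e3_4 e3_5 e3_6 e3_7 e3_8 e3_9 e3_10 e3_11 e3_12 e3_13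
  obtain ⟨z31, hz31⟩ : ∃ t, t = n 3 := ⟨_, rfl⟩
  obtain ⟨z22, hz22⟩ : ∃ t, t = n 5 - n 3 := ⟨_, rfl⟩
  obtain ⟨z21, hz21⟩ : ∃ t, t = n 4 - n 5 := ⟨_, rfl⟩
  obtain ⟨z13, hz13⟩ : ∃ t, t = n 2 - n 5 := ⟨_, rfl⟩
  obtain ⟨z12, hz12⟩ : ∃ t, t = n 1 - n 2 - n 4 + n 3 := ⟨_, rfl⟩
  obtain ⟨z11, hz11⟩ : ∃ t, t = n 0 - z12 - z13 - z21 - z22 - z31 := ⟨_, rfl⟩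
  obtain ⟨z40, hz40⟩ : ∃ t, t = n 9 := ⟨_, rfl⟩
  obtain ⟨z30, hz30⟩ : ∃ t, t = n 8 - n 9 - z31 := ⟨_, rfl⟩
  obtain ⟨z20, hz20⟩ : ∃ t, t = n 7 - n 8 - z21 - z22 := ⟨_, rfl⟩
  obtain ⟨z10, hz10⟩ : ∃ t, t = n 6 - n 7 - z11 - z12 - z13 := ⟨_, rfl⟩
  obtain ⟨z04, hz04⟩ : ∃ t, t = n 13 := ⟨_, rfl⟩
  obtain ⟨z03, hz03⟩ : ∃ t, t = n 12 - n 13 - z13 := ⟨_, rfl⟩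
  obtain ⟨z02, hz02⟩ : ∃ t, t = n 11 - n 12 - z12 - z22 := ⟨_, rfl⟩
  obtain ⟨z01, hz01⟩ : ∃ t, t = n 10 - n 11 - z11 - z21 - z31 := ⟨_, rfl⟩
  have i0 : 0 ≤ z13 := by
    clear h1 h2 h3
    first
      | (clear e2_0 e2_1 e2_2 e2_3 e2_4 e2_5 e2_6 e2_7 e2_8 e2_9 e2_10 e2_11 e2_12 e2_13 e3_0 e3_1 e3_2 e3_3 e3_4 e3_5 e3_6 e3_7 e3_8 e3_9 e3_10 e3_11 e3_12 e3_13; omega)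
      | (clear e1_0 e1_1 e1_2 e1_3 e1_4 e1_5 e1_6 e1_7 e1_8 e1_9 e1_10 e1_11 e1_12 e1_13 e3_0 e3_1 e3_2 e3_3 e3_4 e3_5 e3_6 e3_7 e3_8 e3_9 e3_10 e3_11 e3_12 e3_13; omega)
      | (clear e1_0 e1_1 e1_2 e1_3 e1_4 e1_5 e1_6 e1_7 e1_8 e1_9 e1_10 e1_11 e1_12 e1_13 e2_0 e2_1 e2_2 e2_3 e2_4 e2_5 e2_6 e2_7 e2_8 e2_9 e2_10 e2_11 e2_12 e2_13; omega)
  have i1 : 0 ≤ z13 + z12 := by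
    clear h1 h2 h3
    first
      | (clear e2_0 e2_1 e2_2 e2_3 e2_4 e2_5 e2_6 e2_7 e2_8 e2_9 e2_10 e2_11 e2_12 e2_13 e3_0 e3_1 e3_2 e3_3 e3_4 e3_5 e3_6 e3_7 e3_8 e3_9 e3_10 e3_11 e3_12 e3_13; omega)
      | (clear e1_0 e1_1 e1_2 e1_3 e1_4 e1_5 e1_6 e1_7 e1_8 e1_9 e1_10 e1_11 e1_12 e1_13 e3_0 e3_1 e3_2 e3_3 e3_4 e3_5 e3_6 e3_7 e3_8 e3_9 e3_10 e3_11 e3_12 e3_13; omega)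
      | (clear e1_0 e1_1 e1_2 e1_3 e1_4 e1_5 e1_6 e1_7 e1_8 e1_9 e1_10 e1_11 e1_12 e1_13 e2_0 e2_1 e2_2 e2_3 e2_4 e2_5 e2_6 e2_7 e2_8 e2_9 e2_10 e2_11 e2_12 e2_13; omega)
  have i2 : 0 ≤ z13 + z12 + z11 := by
    clear h1 h2 h3
    first
      | (clear e2_0 e2_1 e2_2 e2_3 e2_4 e2_5 e2_6 e2_7 e2_8 e2_9 e2_10 e2_11 e2_12 e2_13 e3_0 e3_1 e3_2 e3_3 e3_4 e3_5 e3_6 e3_7 e3_8 e3_9 e3_10 e3_11 e3_12 e3_13; omega)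
      | (clear e1_0 e1_1 e1_2 e1_3 e1_4 e1_5 e1_6 e1_7 e1_8 e1_9 e1_10 e1_11 e1_12 e1_13 e3_0 e3_1 e3_2 e3_3 e3_4 e3_5 e3_6 e3_7 e3_8 e3_9 e3_10 e3_11 e3_12 e3_13; omega)
      | (clear e1_0 e1_1 e1_2 e1_3 e1_4 e1_5 e1_6 e1_7 e1_8 e1_9 e1_10 e1_11 e1_12 e1_13 e2_0 e2_1 e2_2 e2_3 e2_4 e2_5 e2_6 e2_7 e2_8 e2_9 e2_10 e2_11 e2_12 e2_13; omega)
  have i3 : 0 ≤ z22 := by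
    clear h1 h2 h3
    first
      | (clear e2_0 e2_1 e2_2 e2_3 e2_4 e2_5 e2_6 e2_7 e2_8 e2_9 e2_10 e2_11 e2_12 e2_13 e3_0 e3_1 e3_2 e3_3 e3_4 e3_5 e3_6 e3_7 e3_8 e3_9 e3_10 e3_11 e3_12 e3_13; omega)
      | (clear e1_0 e1_1 e1_2 e1_3 e1_4 e1_5 e1_6 e1_7 e1_8 e1_9 e1_10 e1_11 e1_12 e1_13 e3_0 e3_1 e3_2 e3_3 e3_4 e3_5 e3_6 e3_7 e3_8 e3_9 e3_10 e3_11 e3_12 e3_13; omega)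
      | (clear e1_0 e1_1 e1_2 e1_3 e1_4 e1_5 e1_6 e1_7 e1_8 e1_9 e1_10 e1_11 e1_12 e1_13 e2_0 e2_1 e2_2 e2_3 e2_4 e2_5 e2_6 e2_7 e2_8 e2_9 e2_10 e2_11 e2_12 e2_13; omega)
  have i4 : 0 ≤ z22 + z21 := by
    clear h1 h2 h3
    first
      | (clear e2_0 e2_1 e2_2 e2_3 e2_4 e2_5 e2_6 e2_7 e2_8 e2_9 e2_10 e2_11 e2_12 e2_13 e3_0 e3_1 e3_2 e3_3 e3_4 e3_5 e3_6 e3_7 e3_8 e3_9 e3_10 e3_11 e3_12 e3_13; omega)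
      | (clear e1_0 e1_1 e1_2 e1_3 e1_4 e1_5 e1_6 e1_7 e1_8 e1_9 e1_10 e1_11 e1_12 e1_13 e3_0 e3_1 e3_2 e3_3 e3_4 e3_5 e3_6 e3_7 e3_8 e3_9 e3_10 e3_11 e3_12 e3_13; omega)
      | (clear e1_0 e1_1 e1_2 e1_3 e1_4 e1_5 e1_6 e1_7 e1_8 e1_9 e1_10 e1_11 e1_12 e1_13 e2_0 e2_1 e2_2 e2_3 e2_4 e2_5 e2_6 e2_7 e2_8 e2_9 e2_10 e2_11 e2_12 e2_13; omega)
  have i5 : 0 ≤ z31 := by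
    clear h1 h2 h3
    first
      | (clear e2_0 e2_1 e2_2 e2_3 e2_4 e2_5 e2_6 e2_7 e2_8 e2_9 e2_10 e2_11 e2_12 e2_13 e3_0 e3_1 e3_2 e3_3 e3_4 e3_5 e3_6 e3_7 e3_8 e3_9 e3_10 e3_11 e3_12 e3_13; omega)
      | (clear e1_0 e1_1 e1_2 e1_3 e1_4 e1_5 e1_6 e1_7 e1_8 e1_9 e1_10 e1_11 e1_12 e1_13 e3_0 e3_1 e3_2 e3_3 e3_4 e3_5 e3_6 e3_7 e3_8 e3_9 e3_10 e3_11 e3_12 e3_13; omega)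
      | (clear e1_0 e1_1 e1_2 e1_3 e1_4 e1_5 e1_6 e1_7 e1_8 e1_9 e1_10 e1_11 e1_12 e1_13 e2_0 e2_1 e2_2 e2_3 e2_4 e2_5 e2_6 e2_7 e2_8 e2_9 e2_10 e2_11 e2_12 e2_13; omega)
  have i6 : 0 ≤ z30 := by
    clear h1 h2 h3
    first
      | (clear e2_0 e2_1 e2_2 e2_3 e2_4 e2_5 e2_6 e2_7 e2_8 e2_9 e2_10 e2_11 e2_12 e2_13 e3_0 e3_1 e3_2 e3_3 e3_4 e3_5 e3_6 e3_7 e3_8 e3_9 e3_10 e3_11 e3_12 e3_13; omega)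
      | (clear e1_0 e1_1 e1_2 e1_3 e1_4 e1_5 e1_6 e1_7 e1_8 e1_9 e1_10 e1_11 e1_12 e1_13 e3_0 e3_1 e3_2 e3_3 e3_4 e3_5 e3_6 e3_7 e3_8 e3_9 e3_10 e3_11 e3_12 e3_13; omega)
      | (clear e1_0 e1_1 e1_2 e1_3 e1_4 e1_5 e1_6 e1_7 e1_8 e1_9 e1_10 e1_11 e1_12 e1_13 e2_0 e2_1 e2_2 e2_3 e2_4 e2_5 e2_6 e2_7 e2_8 e2_9 e2_10 e2_11 e2_12 e2_13; omega)
  have i7 : 0 ≤ z30 + z21 := by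
    clear h1 h2 h3
    first
      | (clear e2_0 e2_1 e2_2 e2_3 e2_4 e2_5 e2_6 e2_7 e2_8 e2_9 e2_10 e2_11 e2_12 e2_13 e3_0 e3_1 e3_2 e3_3 e3_4 e3_5 e3_6 e3_7 e3_8 e3_9 e3_10 e3_11 e3_12 e3_13; omega)
      | (clear e1_0 e1_1 e1_2 e1_3 e1_4 e1_5 e1_6 e1_7 e1_8 e1_9 e1_10 e1_11 e1_12 e1_13 e3_0 e3_1 e3_2 e3_3 e3_4 e3_5 e3_6 e3_7 e3_8 e3_9 e3_10 e3_11 e3_12 e3_13; omega)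
      | (clear e1_0 e1_1 e1_2 e1_3 e1_4 e1_5 e1_6 e1_7 e1_8 e1_9 e1_10 e1_11 e1_12 e1_13 e2_0 e2_1 e2_2 e2_3 e2_4 e2_5 e2_6 e2_7 e2_8 e2_9 e2_10 e2_11 e2_12 e2_13; omega)
  have i8 : 0 ≤ z30 + z21 + z12 := by
    clear h1 h2 h3
    first
      | (clear e2_0 e2_1 e2_2 e2_3 e2_4 e2_5 e2_6 e2_7 e2_8 e2_9 e2_10 e2_11 e2_12 e2_13 e3_0 e3_1 e3_2 e3_3 e3_4 e3_5 e3_6 e3_7 e3_8 e3_9 e3_10 e3_11 e3_12 e3_13; omega)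
      | (clear e1_0 e1_1 e1_2 e1_3 e1_4 e1_5 e1_6 e1_7 e1_8 e1_9 e1_10 e1_11 e1_12 e1_13 e3_0 e3_1 e3_2 e3_3 e3_4 e3_5 e3_6 e3_7 e3_8 e3_9 e3_10 e3_11 e3_12 e3_13; omega)
      | (clear e1_0 e1_1 e1_2 e1_3 e1_4 e1_5 e1_6 e1_7 e1_8 e1_9 e1_10 e1_11 e1_12 e1_13 e2_0 e2_1 e2_2 e2_3 e2_4 e2_5 e2_6 e2_7 e2_8 e2_9 e2_10 e2_11 e2_12 e2_13; omega)
  have i9 : 0 ≤ z20 := by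
    clear h1 h2 h3
    first
      | (clear e2_0 e2_1 e2_2 e2_3 e2_4 e2_5 e2_6 e2_7 e2_8 e2_9 e2_10 e2_11 e2_12 e2_13 e3_0 e3_1 e3_2 e3_3 e3_4 e3_5 e3_6 e3_7 e3_8 e3_9 e3_10 e3_11 e3_12 e3_13; omega)
      | (clear e1_0 e1_1 e1_2 e1_3 e1_4 e1_5 e1_6 e1_7 e1_8 e1_9 e1_10 e1_11 e1_12 e1_13 e3_0 e3_1 e3_2 e3_3 e3_4 e3_5 e3_6 e3_7 e3_8 e3_9 e3_10 e3_11 e3_12 e3_13; omega)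
      | (clear e1_0 e1_1 e1_2 e1_3 e1_4 e1_5 e1_6 e1_7 e1_8 e1_9 e1_10 e1_11 e1_12 e1_13 e2_0 e2_1 e2_2 e2_3 e2_4 e2_5 e2_6 e2_7 e2_8 e2_9 e2_10 e2_11 e2_12 e2_13; omega)
  have i10 : 0 ≤ z20 + z11 := by
    clear h1 h2 h3
    first
      | (clear e2_0 e2_1 e2_2 e2_3 e2_4 e2_5 e2_6 e2_7 e2_8 e2_9 e2_10 e2_11 e2_12 e2_13 e3_0 e3_1 e3_2 e3_3 e3_4 e3_5 e3_6 e3_7 e3_8 e3_9 e3_10 e3_11 e3_12 e3_13; omega)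
      | (clear e1_0 e1_1 e1_2 e1_3 e1_4 e1_5 e1_6 e1_7 e1_8 e1_9 e1_10 e1_11 e1_12 e1_13 e3_0 e3_1 e3_2 e3_3 e3_4 e3_5 e3_6 e3_7 e3_8 e3_9 e3_10 e3_11 e3_12 e3_13; omega)
      | (clear e1_0 e1_1 e1_2 e1_3 e1_4 e1_5 e1_6 e1_7 e1_8 e1_9 e1_10 e1_11 e1_12 e1_13 e2_0 e2_1 e2_2 e2_3 e2_4 e2_5 e2_6 e2_7 e2_8 e2_9 e2_10 e2_11 e2_12 e2_13; omega)
  have i11 : 0 ≤ z10 := by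
    clear h1 h2 h3
    first
      | (clear e2_0 e2_1 e2_2 e2_3 e2_4 e2_5 e2_6 e2_7 e2_8 e2_9 e2_10 e2_11 e2_12 e2_13 e3_0 e3_1 e3_2 e3_3 e3_4 e3_5 e3_6 e3_7 e3_8 e3_9 e3_10 e3_11 e3_12 e3_13; omega)
      | (clear e1_0 e1_1 e1_2 e1_3 e1_4 e1_5 e1_6 e1_7 e1_8 e1_9 e1_10 e1_11 e1_12 e1_13 e3_0 e3_1 e3_2 e3_3 e3_4 e3_5 e3_6 e3_7 e3_8 e3_9 e3_10 e3_11 e3_12 e3_13; omega)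
      | (clear e1_0 e1_1 e1_2 e1_3 e1_4 e1_5 e1_6 e1_7 e1_8 e1_9 e1_10 e1_11 e1_12 e1_13 e2_0 e2_1 e2_2 e2_3 e2_4 e2_5 e2_6 e2_7 e2_8 e2_9 e2_10 e2_11 e2_12 e2_13; omega)
  have i12 : 0 ≤ z01 := by
    clear h1 h2 h3
    first
      | (clear e2_0 e2_1 e2_2 e2_3 e2_4 e2_5 e2_6 e2_7 e2_8 e2_9 e2_10 e2_11 e2_12 e2_13 e3_0 e3_1 e3_2 e3_3 e3_4 e3_5 e3_6 e3_7 e3_8 e3_9 e3_10 e3_11 e3_12 e3_13; omega)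
      | (clear e1_0 e1_1 e1_2 e1_3 e1_4 e1_5 e1_6 e1_7 e1_8 e1_9 e1_10 e1_11 e1_12 e1_13 e3_0 e3_1 e3_2 e3_3 e3_4 e3_5 e3_6 e3_7 e3_8 e3_9 e3_10 e3_11 e3_12 e3_13; omega)
      | (clear e1_0 e1_1 e1_2 e1_3 e1_4 e1_5 e1_6 e1_7 e1_8 e1_9 e1_10 e1_11 e1_12 e1_13 e2_0 e2_1 e2_2 e2_3 e2_4 e2_5 e2_6 e2_7 e2_8 e2_9 e2_10 e2_11 e2_12 e2_13; omega)
  have i13 : 0 ≤ z01 + z11 := by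
    clear h1 h2 h3
    first
      | (clear e2_0 e2_1 e2_2 e2_3 e2_4 e2_5 e2_6 e2_7 e2_8 e2_9 e2_10 e2_11 e2_12 e2_13 e3_0 e3_1 e3_2 e3_3 e3_4 e3_5 e3_6 e3_7 e3_8 e3_9 e3_10 e3_11 e3_12 e3_13; omega)
      | (clear e1_0 e1_1 e1_2 e1_3 e1_4 e1_5 e1_6 e1_7 e1_8 e1_9 e1_10 e1_11 e1_12 e1_13 e3_0 e3_1 e3_2 e3_3 e3_4 e3_5 e3_6 e3_7 e3_8 e3_9 e3_10 e3_11 e3_12 e3_13; omega)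
      | (clear e1_0 e1_1 e1_2 e1_3 e1_4 e1_5 e1_6 e1_7 e1_8 e1_9 e1_10 e1_11 e1_12 e1_13 e2_0 e2_1 e2_2 e2_3 e2_4 e2_5 e2_6 e2_7 e2_8 e2_9 e2_10 e2_11 e2_12 e2_13; omega)
  have i14 : 0 ≤ z01 + z11 + z21 := by
    clear h1 h2 h3
    first
      | (clear e2_0 e2_1 e2_2 e2_3 e2_4 e2_5 e2_6 e2_7 e2_8 e2_9 e2_10 e2_11 e2_12 e2_13 e3_0 e3_1 e3_2 e3_3 e3_4 e3_5 e3_6 e3_7 e3_8 e3_9 e3_10 e3_11 e3_12 e3_13; omega)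
      | (clear e1_0 e1_1 e1_2 e1_3 e1_4 e1_5 e1_6 e1_7 e1_8 e1_9 e1_10 e1_11 e1_12 e1_13 e3_0 e3_1 e3_2 e3_3 e3_4 e3_5 e3_6 e3_7 e3_8 e3_9 e3_10 e3_11 e3_12 e3_13; omega)
      | (clear e1_0 e1_1 e1_2 e1_3 e1_4 e1_5 e1_6 e1_7 e1_8 e1_9 e1_10 e1_11 e1_12 e1_13 e2_0 e2_1 e2_2 e2_3 e2_4 e2_5 e2_6 e2_7 e2_8 e2_9 e2_10 e2_11 e2_12 e2_13; omega)
  have i15 : 0 ≤ z02 := by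
    clear h1 h2 h3
    first
      | (clear e2_0 e2_1 e2_2 e2_3 e2_4 e2_5 e2_6 e2_7 e2_8 e2_9 e2_10 e2_11 e2_12 e2_13 e3_0 e3_1 e3_2 e3_3 e3_4 e3_5 e3_6 e3_7 e3_8 e3_9 e3_10 e3_11 e3_12 e3_13; omega)
      | (clear e1_0 e1_1 e1_2 e1_3 e1_4 e1_5 e1_6 e1_7 e1_8 e1_9 e1_10 e1_11 e1_12 e1_13 e3_0 e3_1 e3_2 e3_3 e3_4 e3_5 e3_6 e3_7 e3_8 e3_9 e3_10 e3_11 e3_12 e3_13; omega)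
      | (clear e1_0 e1_1 e1_2 e1_3 e1_4 e1_5 e1_6 e1_7 e1_8 e1_9 e1_10 e1_11 e1_12 e1_13 e2_0 e2_1 e2_2 e2_3 e2_4 e2_5 e2_6 e2_7 e2_8 e2_9 e2_10 e2_11 e2_12 e2_13; omega)
  have i16 : 0 ≤ z02 + z12 := by
    clear h1 h2 h3
    first
      | (clear e2_0 e2_1 e2_2 e2_3 e2_4 e2_5 e2_6 e2_7 e2_8 e2_9 e2_10 e2_11 e2_12 e2_13 e3_0 e3_1 e3_2 e3_3 e3_4 e3_5 e3_6 e3_7 e3_8 e3_9 e3_10 e3_11 e3_12 e3_13; omega)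
      | (clear e1_0 e1_1 e1_2 e1_3 e1_4 e1_5 e1_6 e1_7 e1_8 e1_9 e1_10 e1_11 e1_12 e1_13 e3_0 e3_1 e3_2 e3_3 e3_4 e3_5 e3_6 e3_7 e3_8 e3_9 e3_10 e3_11 e3_12 e3_13; omega)
      | (clear e1_0 e1_1 e1_2 e1_3 e1_4 e1_5 e1_6 e1_7 e1_8 e1_9 e1_10 e1_11 e1_12 e1_13 e2_0 e2_1 e2_2 e2_3 e2_4 e2_5 e2_6 e2_7 e2_8 e2_9 e2_10 e2_11 e2_12 e2_13; omega)
  have i17 : 0 ≤ z03 := by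
    clear h1 h2 h3
    first
      | (clear e2_0 e2_1 e2_2 e2_3 e2_4 e2_5 e2_6 e2_7 e2_8 e2_9 e2_10 e2_11 e2_12 e2_13 e3_0 e3_1 e3_2 e3_3 e3_4 e3_5 e3_6 e3_7 e3_8 e3_9 e3_10 e3_11 e3_12 e3_13; omega)
      | (clear e1_0 e1_1 e1_2 e1_3 e1_4 e1_5 e1_6 e1_7 e1_8 e1_9 e1_10 e1_11 e1_12 e1_13 e3_0 e3_1 e3_2 e3_3 e3_4 e3_5 e3_6 e3_7 e3_8 e3_9 e3_10 e3_11 e3_12 e3_13; omega)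
      | (clear e1_0 e1_1 e1_2 e1_3 e1_4 e1_5 e1_6 e1_7 e1_8 e1_9 e1_10 e1_11 e1_12 e1_13 e2_0 e2_1 e2_2 e2_3 e2_4 e2_5 e2_6 e2_7 e2_8 e2_9 e2_10 e2_11 e2_12 e2_13; omega)
  have i18 : 0 ≤ z04 := by
    clear h1 h2 h3
    first
      | (clear e2_0 e2_1 e2_2 e2_3 e2_4 e2_5 e2_6 e2_7 e2_8 e2_9 e2_10 e2_11 e2_12 e2_13 e3_0 e3_1 e3_2 e3_3 e3_4 e3_5 e3_6 e3_7 e3_8 e3_9 e3_10 e3_11 e3_12 e3_13; omega)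
      | (clear e1_0 e1_1 e1_2 e1_3 e1_4 e1_5 e1_6 e1_7 e1_8 e1_9 e1_10 e1_11 e1_12 e1_13 e3_0 e3_1 e3_2 e3_3 e3_4 e3_5 e3_6 e3_7 e3_8 e3_9 e3_10 e3_11 e3_12 e3_13; omega)
      | (clear e1_0 e1_1 e1_2 e1_3 e1_4 e1_5 e1_6 e1_7 e1_8 e1_9 e1_10 e1_11 e1_12 e1_13 e2_0 e2_1 e2_2 e2_3 e2_4 e2_5 e2_6 e2_7 e2_8 e2_9 e2_10 e2_11 e2_12 e2_13; omega)
  have i19 : 0 ≤ z40 := by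
    clear h1 h2 h3
    first
      | (clear e2_0 e2_1 e2_2 e2_3 e2_4 e2_5 e2_6 e2_7 e2_8 e2_9 e2_10 e2_11 e2_12 e2_13 e3_0 e3_1 e3_2 e3_3 e3_4 e3_5 e3_6 e3_7 e3_8 e3_9 e3_10 e3_11 e3_12 e3_13; omega)
      | (clear e1_0 e1_1 e1_2 e1_3 e1_4 e1_5 e1_6 e1_7 e1_8 e1_9 e1_10 e1_11 e1_12 e1_13 e3_0 e3_1 e3_2 e3_3 e3_4 e3_5 e3_6 e3_7 e3_8 e3_9 e3_10 e3_11 e3_12 e3_13; omega)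
      | (clear e1_0 e1_1 e1_2 e1_3 e1_4 e1_5 e1_6 e1_7 e1_8 e1_9 e1_10 e1_11 e1_12 e1_13 e2_0 e2_1 e2_2 e2_3 e2_4 e2_5 e2_6 e2_7 e2_8 e2_9 e2_10 e2_11 e2_12 e2_13; omega)
  obtain ⟨k, hk⟩ := chamber z31 z22 z21 z13 z12 z11 z40 z30 z20 z10 z04 z03 z02 z01 i0 i1 i2 i3 i4 i5 i6 i7 i8 i9 i10 i11 i12 i13 i14 i15 i16 i17 i18 i19
  clear e1_0 e1_1 e1_2 e1_3 e1_4 e1_5 e1_6 e1_7 e1_8 e1_9 e1_10 e1_11 e1_12 e1_13 e2_0 e2_1 e2_2 e2_3 e2_4 e2_5 e2_6 e2_7 e2_8 e2_9 e2_10 e2_11 e2_12 e2_13 e3_0 e3_1 e3_2 e3_3 e3_4 e3_5 e3_6 e3_7 e3_8 e3_9 e3_10 e3_11 e3_12 e3_13 h1 h2 h3 i0 i1 i2 i3 i4 i5 i6 i7 i8 i9 i10 i11 i12 i13 i14 i15 i16 i17 i18 i19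
  refine ⟨k, ?_⟩
  rw [lin_vg]
  funext j
  fin_cases j <;> simp only [Fin.mk_zero, Fin.mk_one, Fin.reduceFinMk, Fin.zero_eta, Matrix.cons_val] <;> omega
end TA4

namespace TA4
set_option linter.unusedSimpArgs false

/-- weight of an exponent: the degree in the torus variables -/
def wt (m : Fin 14 → ℕ) : ℕ := m 6 + m 7 + m 8 + m 9 + m 10 + m 11 + m 12 + m 13

/-- all exponents have weight at most `N` -/
def Pd (N : ℕ) (p : MvPolynomial (Fin 14) ℂ) : Prop := ∀ m ∈ p.support, wt m ≤ N

lemma Pd_zero (N : ℕ) : Pd N 0 := by intro m hm; simp at hm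
lemma Pd_one : Pd 0 1 := by
  intro m hm
  rw [MvPolynomial.support_one] at hm
  rw [Finset.mem_singleton.mp hm]; rfl
lemma Pd.mono {N M : ℕ} {p} (h : Pd N p) (hNM : N ≤ M) : Pd M p := fun m hm => (h m hm).trans hNM
lemma Pd.add {N : ℕ} {p q} (hp : Pd N p) (hq : Pd N q) : Pd N (p + q) := by
  classical
  intro m hm
  rcases Finset.mem_union.mp (MvPolynomial.support_add hm) with h | h
  · exact hp m h
  · exact hq m h
lemma Pd.mul {N M : ℕ} {p q} (hp : Pd N p) (hq : Pd M q) : Pd (N + M) (p * q) := by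
  classical
  intro m hm
  obtain ⟨a, ha, b, hb, rfl⟩ := Finset.mem_add.mp (MvPolynomial.support_mul p q hm)
  have h1 := hp a ha
  have h2 := hq b hb
  simp only [wt, Finsupp.add_apply] at *
  omega
lemma Pd_C (c : ℂ) : Pd 0 (C c) := by
  classical
  intro m hm
  rw [MvPolynomial.mem_support_iff, MvPolynomial.coeff_C] at hm
  have : 0 = m := by by_contra h; simp [h] at hm
  subst this; rfl
lemma Pd.neg {N : ℕ} {p} (hp : Pd N p) : Pd N (-p) := by
  intro m hm
  apply hp
  simpa using hm
lemma Pd.sub {N : ℕ} {p q} (hp : Pd N p) (hq : Pd N q) : Pd N (p - q) := by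
  rw [sub_eq_add_neg]; exact hp.add hq.neg
lemma Pd.pow {N : ℕ} {p} (hp : Pd N p) (k : ℕ) : Pd (k * N) (p ^ k) := by
  induction k with
  | zero => simpa using Pd_one
  | succ k ih => rw [pow_succ, Nat.succ_mul]; exact ih.mul hp
lemma Pd_prod {ι : Type} (s : Finset ι) (p : ι → MvPolynomial (Fin 14) ℂ) (N : ι → ℕ)
    (h : ∀ i, Pd (N i) (p i)) : Pd (∑ i ∈ s, N i) (∏ i ∈ s, p i) := by
  classical
  induction s using Finset.induction_on with
  | empty => simpa using Pd_one
  | insert a s ha ih => rw [Finset.prod_insert ha, Finset.sum_insert ha]; exact (h a).mul ih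
lemma Pd_X (i : Fin 14) : Pd (if 6 ≤ i then 1 else 0) (X i) := by
  intro m hm
  rw [MvPolynomial.support_X] at hm
  rw [Finset.mem_singleton.mp hm]
  fin_cases i <;> simp [wt, Finsupp.single_apply]
lemma Pd_X1 (i : Fin 14) : Pd 1 (X i) := (Pd_X i).mono (by split_ifs <;> simp)

section
variable {u v w z : Fin 4 → MvPolynomial (Fin 14) ℂ}
lemma Pd_m1 (hu : ∀ r, Pd 1 (u r)) : Pd 1 (m1 u) := hu 0
lemma Pd_m2 (hu : ∀ r, Pd 1 (u r)) (hv : ∀ r, Pd 1 (v r)) : Pd 2 (m2 u v) :=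
  ((hu _).mul (hv _)).sub ((hu _).mul (hv _))
lemma Pd_m3 (hu : ∀ r, Pd 1 (u r)) (hv : ∀ r, Pd 1 (v r)) (hw : ∀ r, Pd 1 (w r)) :
    Pd 3 (m3 u v w) :=
  (((hu 0).mul (Pd_m2' hv hw)).sub ((hu 1).mul (Pd_m2' hv hw))).add ((hu 2).mul (Pd_m2' hv hw))
where
  Pd_m2' {u v : Fin 4 → MvPolynomial (Fin 14) ℂ} {a b c d : Fin 4}
    (hu : ∀ r, Pd 1 (u r)) (hv : ∀ r, Pd 1 (v r)) :
    Pd 2 (u a * v b - u c * v d) := ((hu _).mul (hv _)).sub ((hu _).mul (hv _))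
lemma Pd_m2g (a b c d : Fin 4)
    (hu : ∀ r, Pd 1 (u r)) (hv : ∀ r, Pd 1 (v r)) :
    Pd 2 (u a * v b - u c * v d) := ((hu _).mul (hv _)).sub ((hu _).mul (hv _))
lemma Pd_m4 (hu : ∀ r, Pd 1 (u r)) (hv : ∀ r, Pd 1 (v r)) (hw : ∀ r, Pd 1 (w r))
    (hz : ∀ r, Pd 1 (z r)) : Pd 4 (m4 u v w z) := by
  have H : ∀ a b c d a' b' c' d', Pd 4 ((u a * v b - u c * v d) * (w a' * z b' - w c' * z d')) :=
    fun a b c d a' b' c' d' => (Pd_m2g a b c d hu hv).mul (Pd_m2g a' b' c' d' hw hz)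
  unfold m4
  exact (((((H _ _ _ _ _ _ _ _).sub (H _ _ _ _ _ _ _ _)).add (H _ _ _ _ _ _ _ _)).add
    (H _ _ _ _ _ _ _ _)).sub (H _ _ _ _ _ _ _ _)).add (H _ _ _ _ _ _ _ _)
end

/-- degrees of the generators -/
def dg : Fin 20 → ℕ := ![1, 2, 3, 4, 1, 2, 3, 4, 2, 3, 4, 3, 4, 4, 4, 5, 6, 5, 6, 6]

lemma Pd_A1 (j r : Fin 4) : Pd 1 (cl (A1 (X : Fin 14 → MvPolynomial (Fin 14) ℂ)) j r) := by
  fin_cases j <;> fin_cases r <;> first | exact Pd_zero 1 | exact Pd_X1 _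
lemma Pd_X0 (i : Fin 14) (hi : ¬ 6 ≤ i) (j : Fin 14) :
    Pd 1 (X i * X j : MvPolynomial (Fin 14) ℂ) := by
  have h := (Pd_X i).mul (Pd_X1 j)
  rw [if_neg hi] at h
  simpa using h
lemma Pd_B1 (j r : Fin 4) : Pd 1 (cl (B1 (X : Fin 14 → MvPolynomial (Fin 14) ℂ)) j r) := by
  fin_cases j <;> fin_cases r <;> simp [cl, B1] <;> first
    | with_reducible exact Pd_zero 1
    | with_reducible exact Pd_X1 _
    | with_reducible exact Pd_X0 _ (by decide) _

lemma Pd_g (j : Fin 20) : Pd (dg j) (sg1 (g j)) := by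
  rw [sg1, ev_g]
  have hA := Pd_A1
  have hB := Pd_B1
  generalize A1 (X : Fin 14 → MvPolynomial (Fin 14) ℂ) = A at *
  generalize B1 (X : Fin 14 → MvPolynomial (Fin 14) ℂ) = B at *
  fin_cases j
  · exact Pd_m1 (u := cl B 0) (hB 0)
  · exact Pd_m2 (hB _) (hB _)
  · exact Pd_m3 (hB _) (hB _) (hB _)
  · exact Pd_m4 (hB _) (hB _) (hB _) (hB _)
  · exact Pd_m1 (u := cl A 0) (hA 0)
  · exact Pd_m2 (hA _) (hB _)
  · exact Pd_m3 (hA _) (hB _) (hB _)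
  · exact Pd_m4 (hA _) (hB _) (hB _) (hB _)
  · exact Pd_m2 (hA _) (hA _)
  · exact Pd_m3 (hA _) (hA _) (hB _)
  · exact Pd_m4 (hA _) (hA _) (hB _) (hB _)
  · exact Pd_m3 (hA _) (hA _) (hA _)
  · exact Pd_m4 (hA _) (hA _) (hA _) (hB _)
  · exact Pd_m4 (hA _) (hA _) (hA _) (hA _)
  · exact ((Pd_m3 (hA _) (hA _) (hB _)).mul (Pd_m1 (hB _))).sub
      ((Pd_m3 (hA _) (hA _) (hB _)).mul (Pd_m1 (hB _)))
  · exact (((Pd_m4 (hA _) (hA _) (hB _) (hB _)).mul (Pd_m1 (hB _))).sub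
      ((Pd_m4 (hA _) (hA _) (hB _) (hB _)).mul (Pd_m1 (hB _)))).add
      ((Pd_m4 (hA _) (hA _) (hB _) (hB _)).mul (Pd_m1 (hB _)))
  · exact ((Pd_m4 (hA _) (hA _) (hB _) (hB _)).mul (Pd_m2 (hB _) (hB _))).sub
      ((Pd_m4 (hA _) (hA _) (hB _) (hB _)).mul (Pd_m2 (hB _) (hB _)))
  · exact ((Pd_m4 (hA _) (hA _) (hA _) (hB _)).mul (Pd_m1 (hB _))).sub
      ((Pd_m4 (hA _) (hA _) (hA _) (hB _)).mul (Pd_m1 (hB _)))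
  · exact (((Pd_m4 (hA _) (hA _) (hA _) (hB _)).mul (Pd_m2 (hB _) (hB _))).sub
      ((Pd_m4 (hA _) (hA _) (hA _) (hB _)).mul (Pd_m2 (hB _) (hB _)))).add
      ((Pd_m4 (hA _) (hA _) (hA _) (hB _)).mul (Pd_m2 (hB _) (hB _)))
  · exact ((Pd_m4 (hA _) (hA _) (hA _) (hB _)).mul (Pd_m2 (hA _) (hB _))).sub
      ((Pd_m4 (hA _) (hA _) (hA _) (hB _)).mul (Pd_m2 (hA _) (hB _)))

lemma wt_eq (k : Fin 20 → ℕ) (m : Fin 14 → ℕ) (h : ∑ i, k i • vg i = ∑ i, m i • o1 i) :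
    ∑ j, k j * dg j = wt m := by
  rw [lin_vg, lin_o1] at h
  have h6 := congrFun h 6
  have h7 := congrFun h 7
  have h8 := congrFun h 8
  have h9 := congrFun h 9
  have h10 := congrFun h 10
  have h11 := congrFun h 11
  have h12 := congrFun h 12
  have h13 := congrFun h 13
  simp only [Matrix.cons_val] at h6 h7 h8 h9 h10 h11 h12 h13
  zify
  rw [sum20]
  simp only [dg, Matrix.cons_val, wt]
  push_cast
  linear_combination h6 + h7 + h8 + h9 + h10 + h11 + h12 + h13

/-- The value at the generic point. -/
noncomputable def val : MV 4 →ₐ[ℂ] KK := ev (A1 (pt1 tt)) (B1 (pt1 tt))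

lemma val_g (j : Fin 20) : OD (val (g j)) (vg j) := by
  have h1 : val (g j) = ex tt j := (ev_g _ _ j).trans (gv_ex tt j)
  rw [h1]
  exact O_ex OSys_KK j

lemma val_prod (k : Fin 20 → ℕ) : OD (val (∏ j, g j ^ k j)) (∑ j, k j • vg j) := by
  rw [map_prod]
  apply OD_prod
  intro j
  rw [map_pow]
  exact (val_g j).pow _

lemma Pd_gprod (k : Fin 20 → ℕ) : Pd (∑ j, k j * dg j) (sg1 (∏ j, g j ^ k j)) := by
  rw [map_prod]
  apply Pd_prod
  intro j
  rw [map_pow]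
  exact (Pd_g j).pow _

lemma val_order {f : MV 4} (hf : f ∈ TA 4) (h0 : f ≠ 0) {N : ℕ} (hN : Pd N (sg1 f)) :
    ∃ k : Fin 20 → ℕ, ∑ j, k j * dg j ≤ N ∧ OD (val f) (∑ j, k j • vg j) := by
  have hq : ∀ i, tt i ≠ 0 := fun i => (OD_tt i).ne
  have s1 : sg1 f ≠ 0 := fun h => h0 (sg1_inj hf h)
  obtain ⟨m, hm, h1⟩ := order_aeval _ s1 (pt1 tt) o1 (O_pt1 OSys_KK) inj_o1
  rw [sg1_aeval] at h1
  have e2 := slice2 hf tt hq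
  have e3 := slice3 hf tt hq
  have s2 : sg2 f ≠ 0 := by
    intro h
    rw [← sg2_aeval, h, map_zero] at e2
    exact h1.ne e2
  have s3 : sg3 f ≠ 0 := by
    intro h
    rw [← sg3_aeval, h, map_zero] at e3
    exact h1.ne e3
  obtain ⟨m', -, h2⟩ := order_aeval _ s2 (pt2 tt) o2 (O_pt2 OSys_KK) inj_o2
  obtain ⟨m'', -, h3⟩ := order_aeval _ s3 (pt3 tt) o3 (O_pt3 OSys_KK) inj_o3
  rw [sg2_aeval, ← e2] at h2
  rw [sg3_aeval, ← e3] at h3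
  obtain ⟨k, hk⟩ := comb _ m m' m'' rfl (h2.inj h1) (h3.inj h1)
  refine ⟨k, ?_, ?_⟩
  · rw [wt_eq k m hk]; exact hN m hm
  · rw [hk]; exact h1

lemma dg_pos : ∀ j : Fin 20, 1 ≤ dg j := by decide

lemma le_adjoin : TA 4 ≤ Algebra.adjoin ℂ (Set.range g) := by
  by_contra hcon
  obtain ⟨f0, hf0, hf0'⟩ := Set.not_subset.mp hcon
  obtain ⟨N, hN⟩ : ∃ N, Pd N (sg1 f0) :=
    ⟨(sg1 f0).support.sup (fun m => wt m), fun m hm =>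
      Finset.le_sup (f := fun m : Fin 14 →₀ ℕ => wt m) hm⟩
  let Bad : Set Ga := {n | ∃ f ∈ TA 4, f ∉ Algebra.adjoin ℂ (Set.range g) ∧ Pd N (sg1 f) ∧
    OD (val f) (ofLex n)}
  have key : ∀ f ∈ TA 4, f ∉ Algebra.adjoin ℂ (Set.range g) → Pd N (sg1 f) →
      ∃ k : Fin 20 → ℕ, ∑ j, k j * dg j ≤ N ∧ OD (val f) (∑ j, k j • vg j) := by
    intro f hf hfA hP
    refine val_order hf ?_ hP
    rintro rfl
    exact hfA (Subalgebra.zero_mem _)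
  have hfin : Bad.Finite := by
    apply Set.Finite.subset ((Set.finite_Iic (fun _ : Fin 20 => N)).image
      (fun k => (toLex (∑ j, k j • vg j) : Ga)))
    rintro n ⟨f, hf, hfA, hP, hO⟩
    obtain ⟨k, hk, hO'⟩ := key f hf hfA hP
    refine ⟨k, ?_, ?_⟩
    · intro j
      have h1 : k j * dg j ≤ ∑ j, k j * dg j :=
        Finset.single_le_sum (f := fun j => k j * dg j) (fun _ _ => Nat.zero_le _) (Finset.mem_univ j)
      have h2 : 1 ≤ dg j := dg_pos j
      exact (Nat.le_mul_of_pos_right _ h2).trans (h1.trans hk)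
    · exact congrArg toLex (hO'.inj hO)
  have hne : Bad.Nonempty := by
    obtain ⟨k, hk, hO'⟩ := key f0 hf0 hf0' hN
    exact ⟨toLex (∑ j, k j • vg j), f0, hf0, hf0', hN, hO'⟩
  obtain ⟨n, ⟨f, hf, hfA, hP, hO⟩, hmax⟩ := Set.exists_max_image Bad id hfin hne
  obtain ⟨k, hk, hO'⟩ := key f hf hfA hP
  obtain ⟨c, hc⟩ := leaf hO' (val_prod k)
  have hA : C c * ∏ j, g j ^ k j ∈ Algebra.adjoin ℂ (Set.range g) := by
    apply Subalgebra.mul_mem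
    · exact Subalgebra.algebraMap_mem _ c
    · exact Subalgebra.prod_mem _ fun j _ =>
        Subalgebra.pow_mem _ (Algebra.subset_adjoin (Set.mem_range_self j)) _
  have hf' : f - C c * ∏ j, g j ^ k j ∈ TA 4 := Subalgebra.sub_mem _ hf (adjoin_le hA)
  have hfA' : f - C c * ∏ j, g j ^ k j ∉ Algebra.adjoin ℂ (Set.range g) := by
    intro h
    apply hfA
    have := Subalgebra.add_mem _ h hA
    rwa [sub_add_cancel] at this
  have hP' : Pd N (sg1 (f - C c * ∏ j, g j ^ k j)) := by
    rw [map_sub, map_mul]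
    refine hP.sub ?_
    have h1 : sg1 (C c) = C c := sg1.commutes c
    rw [h1]
    have := (Pd_C c).mul (Pd_gprod k)
    rw [zero_add] at this
    exact this.mono hk
  obtain ⟨k', -, hO''⟩ := key _ hf' hfA' hP'
  have hle := hmax (toLex (∑ j, k' j • vg j)) ⟨_, hf', hfA', hP', hO''⟩
  have hv : val (f - C c * ∏ j, g j ^ k j) = val f - algebraMap ℂ KK c * val (∏ j, g j ^ k j) := by
    rw [map_sub, map_mul]
    congr 2
    exact val.commutes c
  rw [← hv] at hc
  unfold OD at hO''
  rw [hO'', WithTop.coe_lt_coe] at hc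
  have hn : n = toLex (∑ j, k j • vg j) := congrArg toLex (hO.inj hO')
  rw [hn] at hle
  exact absurd hc (not_lt.mpr hle)

end TA4


/-- The `GL(4)` tensor product algebra `TA(4)` is generated as a `ℂ`-algebra by the
twenty polynomials `g₁, ..., g₂₀`. -/
theorem TA4_generators : Algebra.adjoin ℂ (Set.range g) = TA 4 := by
  exact le_antisymm TA4.adjoin_le TA4.le_adjoin
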